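/- arXiv:1705.03208 — 5 statements merged into one kernel-verified Lean document; each statement's English description precedes it below -/
import Mathlib

section
/- Let L be a finite-dimensional nilpotent Lie algebra of nilpotency class c over a field k, with dim(L) = n and dim(γ₂(L)) = m ≥ 1. Then dim(M(L)) ≤ (1/2)(n−m−1)(n+m) − Σ_{i=2}^{min(n−m,c)} (n−m−i), where M(L) is the Schur multiplier of L computed from any free presentation via the Hopf formula. -/
/-- The dimension of the Schur multiplier `M(L) = (R ∩ γ₂(F)) / [R, F]` of a Lie algebra `L`,
computed from the free presentation `π : F → L` with `F = FreeLieAlgebra k X` and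
`R = ker π`, via the Hopf formula. -/
noncomputable def schurMultiplierDim (k : Type*) [Field k] {X L : Type*}
    [LieRing L] [LieAlgebra k L] (π : FreeLieAlgebra k X →ₗ⁅k⁆ L) : ℕ :=
  let R : LieIdeal k (FreeLieAlgebra k X) := π.ker
  let S : Submodule k (FreeLieAlgebra k X) :=
    (R ⊓ LieModule.lowerCentralSeries k (FreeLieAlgebra k X) (FreeLieAlgebra k X) 1).toSubmodule
  let T : Submodule k (FreeLieAlgebra k X) :=
    (⁅R, (⊤ : LieIdeal k (FreeLieAlgebra k X))⁆ : LieIdeal k (FreeLieAlgebra k X)).toSubmodule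
  Module.finrank k (↥S ⧸ T.comap S.subtype)

/-
For a surjection `f : E → L`, put `H = E / [ker f, E]`. The bracket of `H` depends only on the
images of its arguments in `L`, so it is an alternating bilinear map `c : L × L → H` satisfying the
Jacobi identity, that is, a 2-cocycle of `L` with trivial coefficients, and its values span `γ₂(H)`.
An extension of `γ₂(L)` by `(ker f ∩ γ₂(E)) / [ker f, E]`, this space has dimension
`dim M(L) + dim γ₂(L)`, so it suffices to bound it.

Filter the span of the values of `c` by `V j = c(L, γ_{j+1}(L))`, and let `d = dim L/γ₂(L)`. Since
`c` induces `L/γ₂(L) × γ_{j+1}(L)/γ_{j+2}(L) → V j / V (j + 1)`, the quotient has dimension at most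
`d * dim (γ_{j+1}(L)/γ_{j+2}(L))`, and at most `d.choose 2` for `j = 0`. For `j > 0` there is a loss
as long as `γ_{j+2}(L) ≠ γ_{j+1}(L)`: an iterated bracket `w = [x₀, [x₁, …, xⱼ]]` outside
`γ_{j+2}(L)` satisfies, by the Jacobi identity, `c(L, w) ⊆ ∑ᵢ c(xᵢ, γ_{j+1}(L))`, so that only
`j + 1` of the `d` values `c(bᵢ, w)` on a basis `bᵢ` of `L/γ₂(L)` are new. This saves `d - (j + 1)`
dimensions.
-/

open LieModule LieModule.Cohomology Module Submodule

section LinearAlgebra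

instance {R M N P : Type*} [CommSemiring R] [AddCommMonoid M] [Module R M] [AddCommMonoid N]
    [Module R N] [AddCommMonoid P] [Module R P] (β : M →ₗ[R] N →ₗ[R] P) (U : Submodule R M)
    (V : Submodule R N) [Module.Finite R U] [Module.Finite R V] : Module.Finite R (map₂ β U V) :=
  Module.Finite.iff_fg.2 ((Module.Finite.iff_fg.1 ‹_›).map₂ β (Module.Finite.iff_fg.1 ‹_›))

variable {k M N P : Type*} [Field k] [AddCommGroup M] [Module k M] [AddCommGroup N] [Module k N]
  [AddCommGroup P] [Module k P]

lemma finrank_map₂_le (β : M →ₗ[k] N →ₗ[k] P) (U : Submodule k M) (V : Submodule k N)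
    [FiniteDimensional k U] [FiniteDimensional k V] :
    finrank k (map₂ β U V) ≤ finrank k U * finrank k V := by
  rw [TensorProduct.map₂_eq_range_lift_comp_mapIncl, ← finrank_tensorProduct]
  exact LinearMap.finrank_range_le _

lemma finrank_map₂_self_le_choose_two (β : M →ₗ[k] M →ₗ[k] P) (hβ : β.IsAlt)
    (U : Submodule k M) [FiniteDimensional k U] :
    finrank k (map₂ β U U) ≤ (finrank k U).choose 2 := by
  classical
  let b := finBasis k U
  let pairs : Finset (Fin (finrank k U) × Fin (finrank k U)) := {p | p.1 < p.2}
  let values : Finset P := pairs.image fun p ↦ β (b p.1) (b p.2)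
  have value_mem {i j} (hij : i < j) : β (b i) (b j) ∈ span k (values : Set P) :=
    subset_span (Finset.mem_image.2 ⟨(i, j), by simpa [pairs] using hij, rfl⟩)
  have span_basis : U = span k (Set.range fun i ↦ (b i : M)) := by
    have := congrArg (Submodule.map U.subtype) b.span_eq
    rwa [map_span, ← Set.range_comp, Submodule.map_top, range_subtype, eq_comm] at this
  have map₂_le_span : map₂ β U U ≤ span k (values : Set P) := by
    conv_lhs => rw [span_basis, map₂_span_span]
    rw [span_le]
    rintro _ ⟨_, ⟨i, rfl⟩, _, ⟨j, rfl⟩, rfl⟩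
    rcases lt_trichotomy i j with hij | rfl | hji
    · exact value_mem hij
    · simp only [hβ.self_eq_zero, SetLike.mem_coe, zero_mem]
    · change β (b i) (b j) ∈ span k (values : Set P)
      rw [← hβ.neg]
      exact neg_mem (value_mem hji)
  calc finrank k (map₂ β U U) ≤ finrank k (span k (values : Set P)) := finrank_mono map₂_le_span
    _ ≤ values.card := finrank_span_finset_le_card values
    _ ≤ pairs.card := Finset.card_image_le
    _ = (finrank k U).choose 2 := by
      rw [Fintype.card_product_filter_lt, Fintype.card_fin]

lemma finrank_inf_quotient_add_finrank_map (f : M →ₗ[k] N) (D T : Submodule k M)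
    (hT : T ≤ LinearMap.ker f) [FiniteDimensional k (D.map T.mkQ)] :
    finrank k (↥(LinearMap.ker f ⊓ D) ⧸ T.comap (LinearMap.ker f ⊓ D).subtype)
      + finrank k (D.map f) = finrank k (D.map T.mkQ) := by
  let S := LinearMap.ker f ⊓ D
  let g := (T.liftQ f hT).domRestrict (D.map T.mkQ)
  have range_g : LinearMap.range g = D.map f := by
    rw [LinearMap.range_domRestrict, ← map_comp, liftQ_mkQ]
  have map_ker_g : (LinearMap.ker g).map (D.map T.mkQ).subtype = S.map T.mkQ := by
    ext y
    constructor
    · rintro ⟨⟨_, x, hx, rfl⟩, hgx, rfl⟩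
      exact ⟨x, ⟨hgx, hx⟩, rfl⟩
    · rintro ⟨x, ⟨hfx, hx⟩, rfl⟩
      exact ⟨⟨_, x, hx, rfl⟩, hfx, rfl⟩
  have ker_mkQ_restrict : LinearMap.ker (T.mkQ ∘ₗ S.subtype) = T.comap S.subtype := by
    rw [LinearMap.ker_comp, ker_mkQ]
  have finrank_quotient : finrank k (↥S ⧸ T.comap S.subtype) = finrank k (S.map T.mkQ) := by
    rw [← ker_mkQ_restrict, (T.mkQ ∘ₗ S.subtype).quotKerEquivRange.finrank_eq,
      LinearMap.range_comp, range_subtype]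
  have finrank_ker_g : finrank k (LinearMap.ker g) = finrank k (S.map T.mkQ) := by
    rw [← map_ker_g, finrank_map_subtype_eq]
  rw [finrank_quotient, ← finrank_ker_g, ← range_g, add_comm, g.finrank_range_add_finrank_ker]

end LinearAlgebra

section LowerCentralSeries

variable {R L M : Type*} [CommRing R] [LieRing L] [LieAlgebra R L]
  [AddCommGroup M] [Module R M] [LieRingModule L M]

lemma lie_mem_lowerCentralSeries_succ {j : ℕ} (x : L) {m : M}
    (hm : m ∈ lowerCentralSeries R L M j) : ⁅x, m⁆ ∈ lowerCentralSeries R L M (j + 1) := by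
  rw [LieModule.lowerCentralSeries_succ]
  exact LieSubmodule.lie_mem_lie (LieSubmodule.mem_top x) hm

lemma lowerCentralSeries_add_eq_of_succ_eq {j : ℕ}
    (h : lowerCentralSeries R L M (j + 1) = lowerCentralSeries R L M j) (l : ℕ) :
    lowerCentralSeries R L M (j + l) = lowerCentralSeries R L M j := by
  induction l with
  | zero => rfl
  | succ l ih =>
    rw [← add_assoc, LieModule.lowerCentralSeries_succ, ih, ← LieModule.lowerCentralSeries_succ, h]

lemma lowerCentralSeries_succ_ne {c : ℕ} (hc : lowerCentralSeries R L M c = ⊥)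
    (hc' : lowerCentralSeries R L M (c - 1) ≠ ⊥) {j : ℕ} (hj : j < c) :
    lowerCentralSeries R L M (j + 1) ≠ lowerCentralSeries R L M j := by
  intro h
  have stable := lowerCentralSeries_add_eq_of_succ_eq h
  apply hc'
  rw [← hc, show c - 1 = j + (c - 1 - j) by lia, stable]
  conv_rhs => rw [show c = j + (c - j) by lia, stable]

variable [LieModule R L M]

attribute [local instance] LieRing.ofAssociativeRing

lemma toSubmodule_lowerCentralSeries_succ (j : ℕ) :
    (lowerCentralSeries R L M (j + 1)).toSubmodule =
      map₂ (toEnd R L M).toLinearMap ⊤ (lowerCentralSeries R L M j).toSubmodule := by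
  rw [LieModule.lowerCentralSeries_succ, LieSubmodule.lieIdeal_oper_eq_linear_span',
    map₂_eq_span_image2]
  rfl

lemma lie_mem_lowerCentralSeries_add {i j : ℕ} {x : L} {m : M}
    (hx : x ∈ lowerCentralSeries R L L i) (hm : m ∈ lowerCentralSeries R L M j) :
    ⁅x, m⁆ ∈ lowerCentralSeries R L M (i + j + 1) := by
  induction i generalizing j x m with
  | zero => simpa only [zero_add] using lie_mem_lowerCentralSeries_succ x hm
  | succ i ih =>
    let Y := (lowerCentralSeries R L M (i + 1 + j + 1)).toSubmodule.comap
      ((toEnd R L M).toLinearMap.flip m)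
    suffices (lowerCentralSeries R L L (i + 1)).toSubmodule ≤ Y from this hx
    rw [toSubmodule_lowerCentralSeries_succ, map₂_le]
    intro y _ z hz
    change ⁅⁅y, z⁆, m⁆ ∈ lowerCentralSeries R L M (i + 1 + j + 1)
    rw [lie_lie, show i + 1 + j + 1 = i + j + 1 + 1 by ring]
    exact sub_mem (lie_mem_lowerCentralSeries_succ y (ih hz hm))
      (ih hz (lie_mem_lowerCentralSeries_succ y hm))

variable (R L M) in
lemma lowerCentralSeries_eq_span_foldr_lie (j : ℕ) :
    (lowerCentralSeries R L M j).toSubmodule =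
      span R {w | ∃ (xs : List L) (m : M), xs.length = j ∧ xs.foldr (⁅·, ·⁆) m = w} := by
  induction j with
  | zero =>
    rw [LieModule.lowerCentralSeries_zero, LieSubmodule.top_toSubmodule, eq_comm, eq_top_iff]
    exact fun m _ ↦ subset_span ⟨[], m, rfl, rfl⟩
  | succ j ih =>
    rw [toSubmodule_lowerCentralSeries_succ, ih, ← span_univ, map₂_span_span]
    congr 1
    ext w
    constructor
    · rintro ⟨x, -, _, ⟨xs, m, hxs, rfl⟩, rfl⟩
      exact ⟨x :: xs, m, by rw [List.length_cons, hxs], rfl⟩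
    · rintro ⟨_ | ⟨x, xs⟩, m, hxs, rfl⟩
      · cases hxs
      exact ⟨x, trivial, _, ⟨xs, m, Nat.succ.inj hxs, rfl⟩, rfl⟩

lemma foldr_lie_mem_lowerCentralSeries (xs : List L) (m : M) :
    xs.foldr (⁅·, ·⁆) m ∈ lowerCentralSeries R L M xs.length := by
  rw [← LieSubmodule.mem_toSubmodule, lowerCentralSeries_eq_span_foldr_lie]
  exact subset_span ⟨xs, m, rfl, rfl⟩

end LowerCentralSeries

section TwoCocycle

variable {R L P : Type*} [CommRing R] [LieRing L] [LieAlgebra R L] [AddCommGroup P] [Module R P]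
  [LieRingModule L P] [LieModule R L P]

/-- The span of the values `c x y` of a 2-cocycle with `x ∈ L` and `y ∈ γ_{j+1}(L)`. These
submodules form a decreasing filtration of the span of all values, which is the case `j = 0`. The
index is that of `LieModule.lowerCentralSeries`, which starts at `0`. -/
def valueFiltration (c : twoCocycle R L P) (j : ℕ) : Submodule R P :=
  map₂ c.1.1 ⊤ (lowerCentralSeries R L L j).toSubmodule

instance (c : twoCocycle R L P) (j : ℕ) [IsNoetherian R L] :
    Module.Finite R (valueFiltration c j) :=
  inferInstanceAs <| Module.Finite R (map₂ c.1.1 ⊤ (lowerCentralSeries R L L j).toSubmodule)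

lemma valueFiltration_eq_bot {c : twoCocycle R L P} {j : ℕ}
    (hj : lowerCentralSeries R L L j = ⊥) : valueFiltration c j = ⊥ := by
  rw [valueFiltration, hj, LieSubmodule.bot_toSubmodule, map₂_bot_right]

variable [LieModule.IsTrivial L P]

lemma twoCocycle_apply_lie (c : twoCocycle R L P) (x y z : L) :
    c.1 x ⁅y, z⁆ = c.1 ⁅x, y⁆ z + c.1 y ⁅x, z⁆ :=
  (mem_twoCocycle_iff_of_trivial R L P c.1).1 c.2 x y z

lemma map₂_lowerCentralSeries_one_le_valueFiltration_succ (c : twoCocycle R L P) (j : ℕ) :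
    map₂ c.1.1 (lowerCentralSeries R L L 1).toSubmodule (lowerCentralSeries R L L j).toSubmodule ≤
      valueFiltration c (j + 1) := by
  rw [map₂_le]
  intro u hu z hz
  suffices (lowerCentralSeries R L L 1).toSubmodule ≤
    (valueFiltration c (j + 1)).comap (c.1.1.flip z) from this hu
  rw [toSubmodule_lowerCentralSeries_succ, map₂_le]
  intro x _ y _
  change c.1 ⁅x, y⁆ z ∈ valueFiltration c (j + 1)
  rw [← sub_eq_of_eq_add (twoCocycle_apply_lie c x y z)]
  exact sub_mem (apply_mem_map₂ _ mem_top (lie_mem_lowerCentralSeries_succ y hz))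
    (apply_mem_map₂ _ mem_top (lie_mem_lowerCentralSeries_succ x hz))

lemma twoCocycle_apply_foldr_lie_mem (c : twoCocycle R L P) (xs : List L) (x : L) {l : ℕ} {v : L}
    (hv : v ∈ lowerCentralSeries R L L l) :
    c.1 v (xs.foldr (⁅·, ·⁆) x) ∈ map₂ c.1.1 (span R {y | y ∈ x :: xs})
      (lowerCentralSeries R L L (l + xs.length)).toSubmodule := by
  induction xs generalizing l v with
  | nil =>
    rw [List.foldr_nil, ← twoCochain_skew]
    exact neg_mem (apply_mem_map₂ _ (subset_span List.mem_cons_self) hv)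
  | cons y ys ih =>
    rw [List.foldr_cons, twoCocycle_apply_lie, List.length_cons]
    refine add_mem ?_ (apply_mem_map₂ _ (subset_span ?_) ?_)
    · have hvy : ⁅v, y⁆ ∈ lowerCentralSeries R L L (l + 1) := by
        rw [← lie_skew]
        exact neg_mem (lie_mem_lowerCentralSeries_succ y hv)
      rw [add_comm ys.length, ← add_assoc]
      exact map₂_le_map₂_left (span_mono (List.cons_subset_cons x (List.subset_cons_self y ys)))
        (ih hvy)
    · exact List.mem_cons_of_mem _ List.mem_cons_self
    · exact lie_mem_lowerCentralSeries_add hv (foldr_lie_mem_lowerCentralSeries ys x)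

lemma map₂_le_sup_valueFiltration_succ (c : twoCocycle R L P) {U : Submodule R L}
    (hU : U ⊔ (lowerCentralSeries R L L 1).toSubmodule = ⊤) {j : ℕ} (K : Submodule R L)
    {V : Submodule R L} (hV : V ≤ (lowerCentralSeries R L L j).toSubmodule) :
    map₂ c.1.1 K V ≤ map₂ c.1.1 U V ⊔ valueFiltration c (j + 1) := by
  grw [le_top (a := K), ← hU, map₂_sup_left,
    map₂_le_map₂_right (p := (lowerCentralSeries R L L 1).toSubmodule) hV,
    map₂_lowerCentralSeries_one_le_valueFiltration_succ]

lemma valueFiltration_le_sup (c : twoCocycle R L P) {U K V : Submodule R L} {j : ℕ} {w : L}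
    (hU : U ⊔ (lowerCentralSeries R L L 1).toSubmodule = ⊤)
    (hK : map₂ c.1.1 ⊤ (span R {w}) ≤
      map₂ c.1.1 K (lowerCentralSeries R L L j).toSubmodule ⊔ valueFiltration c (j + 1))
    (hV : (lowerCentralSeries R L L (j + 1)).toSubmodule ⊔ span R {w} ⊔ V =
      (lowerCentralSeries R L L j).toSubmodule) :
    valueFiltration c j ≤
      map₂ c.1.1 U V ⊔ map₂ c.1.1 K (span R {w}) ⊔ valueFiltration c (j + 1) := by
  have hVj : V ≤ (lowerCentralSeries R L L j).toSubmodule := hV ▸ le_sup_right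
  have split (K' : Submodule R L) : map₂ c.1.1 K' (lowerCentralSeries R L L j).toSubmodule ≤
      map₂ c.1.1 U V ⊔ map₂ c.1.1 K' (span R {w}) ⊔ valueFiltration c (j + 1) := by
    rw [← hV, map₂_sup_right, map₂_sup_right]
    refine sup_le (sup_le (le_sup_of_le_right (map₂_le_map₂_left le_top))
      (le_sup_of_le_left le_sup_right)) ?_
    exact (map₂_le_sup_valueFiltration_succ c hU K' hVj).trans
      (sup_le_sup_right le_sup_left _)
  calc valueFiltration c j
      ≤ map₂ c.1.1 U V ⊔ map₂ c.1.1 ⊤ (span R {w}) ⊔ valueFiltration c (j + 1) := split ⊤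
    _ ≤ _ := sup_le (sup_le (le_sup_of_le_left le_sup_left)
        (hK.trans (sup_le (split K) le_sup_right))) le_sup_right

end TwoCocycle

section Dimension

variable {k L P : Type*} [Field k] [LieRing L] [LieAlgebra k L]
  [AddCommGroup P] [Module k P] [LieRingModule L P] [LieModule k L P] [LieModule.IsTrivial L P]

variable (k L) in
lemma exists_finrank_eq_sup_lowerCentralSeries_one_eq_top :
    ∃ U : Submodule k L, finrank k U = finrank k (L ⧸ lowerCentralSeries k L L 1) ∧
      U ⊔ (lowerCentralSeries k L L 1).toSubmodule = ⊤ := by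
  obtain ⟨U, hU⟩ := Submodule.exists_isCompl (lowerCentralSeries k L L 1).toSubmodule
  exact ⟨U, (quotientEquivOfIsCompl _ U hU).finrank_eq.symm, hU.symm.sup_eq_top⟩

lemma exists_mem_lowerCentralSeries_map₂_span_singleton_le (c : twoCocycle k L P) {j : ℕ}
    (hj : lowerCentralSeries k L L (j + 1) ≠ lowerCentralSeries k L L j) :
    ∃ w ∈ lowerCentralSeries k L L j, w ∉ lowerCentralSeries k L L (j + 1) ∧
      ∃ K : Submodule k L,
        finrank k K ≤ min (finrank k (L ⧸ lowerCentralSeries k L L 1)) (j + 1) ∧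
        map₂ c.1.1 ⊤ (span k {w}) ≤
          map₂ c.1.1 K (lowerCentralSeries k L L j).toSubmodule ⊔ valueFiltration c (j + 1) := by
  classical
  obtain ⟨xs, x, rfl, hw⟩ : ∃ (xs : List L) (x : L), xs.length = j ∧
      xs.foldr (⁅·, ·⁆) x ∉ lowerCentralSeries k L L (j + 1) := by
    by_contra! h
    refine hj (le_antisymm (antitone_lowerCentralSeries k L L j.le_succ) ?_)
    rw [← LieSubmodule.toSubmodule_le_toSubmodule, lowerCentralSeries_eq_span_foldr_lie k L L j,
      span_le]
    rintro _ ⟨xs, x, hxs, rfl⟩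
    exact h xs x hxs
  have hwj := foldr_lie_mem_lowerCentralSeries (R := k) xs x
  refine ⟨_, hwj, hw, ?_⟩
  rcases le_total (finrank k (L ⧸ lowerCentralSeries k L L 1)) (xs.length + 1) with hd | hd
  · obtain ⟨U, hUd, hU⟩ := exists_finrank_eq_sup_lowerCentralSeries_one_eq_top k L
    have hspan : span k {xs.foldr (⁅·, ·⁆) x} ≤ (lowerCentralSeries k L L xs.length).toSubmodule :=
      (span_singleton_le_iff_mem _ _).2 hwj
    refine ⟨U, by rw [hUd, min_eq_left hd], ?_⟩
    grw [map₂_le_sup_valueFiltration_succ c hU ⊤ hspan, hspan]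
  · refine ⟨span k {y | y ∈ x :: xs}, ?_, le_sup_of_le_left (map₂_le.2 fun v _ w' hw' ↦ ?_)⟩
    · rw [min_eq_right hd, ← List.coe_toFinset]
      exact (finrank_span_finset_le_card _).trans (List.toFinset_card_le _)
    · obtain ⟨a, rfl⟩ := mem_span_singleton.1 hw'
      rw [map_smul]
      refine smul_mem _ a ?_
      have hv : v ∈ lowerCentralSeries k L L 0 := LieSubmodule.mem_top v
      have hmem := twoCocycle_apply_foldr_lie_mem c xs x hv
      rwa [zero_add] at hmem

variable [FiniteDimensional k L]

lemma finrank_valueFiltration_add_le_succ (c : twoCocycle k L P) {j : ℕ}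
    (hj : lowerCentralSeries k L L (j + 1) ≠ lowerCentralSeries k L L j) :
    finrank k (valueFiltration c j)
        + finrank k (L ⧸ lowerCentralSeries k L L 1) * finrank k (lowerCentralSeries k L L (j + 1))
        + (finrank k (L ⧸ lowerCentralSeries k L L 1) - (j + 1)) ≤
      finrank k (valueFiltration c (j + 1))
        + finrank k (L ⧸ lowerCentralSeries k L L 1) * finrank k (lowerCentralSeries k L L j) := by
  obtain ⟨w, hwj, hw, K, hK, hcK⟩ := exists_mem_lowerCentralSeries_map₂_span_singleton_le c hj
  obtain ⟨U, hUd, hU⟩ := exists_finrank_eq_sup_lowerCentralSeries_one_eq_top k L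
  have hle : (lowerCentralSeries k L L (j + 1)).toSubmodule ⊔ span k {w} ≤
      (lowerCentralSeries k L L j).toSubmodule :=
    sup_le (antitone_lowerCentralSeries k L L j.le_succ) ((span_singleton_le_iff_mem _ _).2 hwj)
  obtain ⟨V, hdisj, hV⟩ := IsModularLattice.exists_disjoint_and_sup_eq hle
  have hdimV : finrank k (lowerCentralSeries k L L (j + 1)) + 1 + finrank k V =
      finrank k (lowerCentralSeries k L L j) := by
    have := finrank_sup_add_finrank_inf_eq
      ((lowerCentralSeries k L L (j + 1)).toSubmodule ⊔ span k {w}) V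
    rw [hV, hdisj.eq_bot, finrank_bot, add_zero, finrank_sup_span_singleton hw] at this
    exact this.symm
  have hdimKw : finrank k (map₂ c.1.1 K (span k {w})) ≤ finrank k K := by
    rw [map₂_span_singleton_eq_map_flip]
    exact finrank_map_le _ _
  have hdim : finrank k (valueFiltration c j) ≤
      finrank k U * finrank k V + finrank k K + finrank k (valueFiltration c (j + 1)) := by
    grw [finrank_mono (valueFiltration_le_sup c hU hcK hV), finrank_add_le_finrank_add_finrank,
      finrank_add_le_finrank_add_finrank, finrank_map₂_le, hdimKw]
  rw [← hdimV, mul_add, mul_add, mul_one]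
  rw [hUd] at hdim
  lia

lemma finrank_valueFiltration_zero_le (c : twoCocycle k L P) :
    finrank k (valueFiltration c 0) ≤
      (finrank k (L ⧸ lowerCentralSeries k L L 1)).choose 2 + finrank k (valueFiltration c 1) := by
  obtain ⟨U, hUd, hU⟩ := exists_finrank_eq_sup_lowerCentralSeries_one_eq_top k L
  have hle : valueFiltration c 0 ≤ map₂ c.1.1 U U ⊔ valueFiltration c 1 :=
    calc valueFiltration c 0
        ≤ map₂ c.1.1 U ⊤ ⊔ valueFiltration c 1 :=
          map₂_le_sup_valueFiltration_succ c hU (j := 0) ⊤ le_rfl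
      _ ≤ map₂ c.1.1 U U ⊔ valueFiltration c 1 := by
        rw [← hU, map₂_sup_right]
        exact sup_le (sup_le_sup_left (map₂_le_map₂_left le_top) _) le_sup_right
  grw [finrank_mono hle, finrank_add_le_finrank_add_finrank,
    finrank_map₂_self_le_choose_two _ c.1.2 U, hUd]

lemma finrank_valueFiltration_one_add_sum_le (c : twoCocycle k L P) {n : ℕ} (hn : 1 ≤ n)
    (h : ∀ j < n, lowerCentralSeries k L L (j + 1) ≠ lowerCentralSeries k L L j) :
    finrank k (valueFiltration c 1)
        + finrank k (L ⧸ lowerCentralSeries k L L 1) * finrank k (lowerCentralSeries k L L n)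
        + ∑ i ∈ Finset.Icc 2 n, (finrank k (L ⧸ lowerCentralSeries k L L 1) - i) ≤
      finrank k (valueFiltration c n)
        + finrank k (L ⧸ lowerCentralSeries k L L 1) * finrank k (lowerCentralSeries k L L 1) := by
  induction n, hn using Nat.le_induction with
  | base => simp
  | succ n hn ih =>
    have step := finrank_valueFiltration_add_le_succ c (h n n.lt_succ_self)
    specialize ih fun j hj ↦ h j (hj.trans n.lt_succ_self)
    rw [Finset.sum_Icc_succ_top (by lia)]
    lia

theorem finrank_valueFiltration_zero_add_sum_le (c : twoCocycle k L P) {n : ℕ}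
    (hn : lowerCentralSeries k L L n = ⊥) (hn' : lowerCentralSeries k L L (n - 1) ≠ ⊥) :
    finrank k (valueFiltration c 0)
        + ∑ i ∈ Finset.Icc 2 n, (finrank k (L ⧸ lowerCentralSeries k L L 1) - i) ≤
      (finrank k (L ⧸ lowerCentralSeries k L L 1)).choose 2
        + finrank k (L ⧸ lowerCentralSeries k L L 1) * finrank k (lowerCentralSeries k L L 1) := by
  have one_le : 1 ≤ n := by
    by_contra! h
    obtain rfl : n = 0 := by lia
    exact hn' hn
  have h₀ := finrank_valueFiltration_zero_le c
  have h₁ := finrank_valueFiltration_one_add_sum_le c one_le fun _ ↦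
    lowerCentralSeries_succ_ne hn hn'
  rw [valueFiltration_eq_bot hn, finrank_bot] at h₁
  lia

end Dimension

lemma cast_sum_Icc_tsub (d c : ℕ) :
    ((∑ i ∈ Finset.Icc 2 c, (d - i) : ℕ) : ℤ) = ∑ i ∈ Finset.Icc 2 (min d c), ((d : ℤ) - i) := by
  have subset : Finset.Icc 2 (min d c) ⊆ Finset.Icc 2 c :=
    Finset.Icc_subset_Icc_right (min_le_right d c)
  rw [← Finset.sum_subset subset fun i hi hi' ↦ ?_, Nat.cast_sum]
  · refine Finset.sum_congr rfl fun i hi ↦ Nat.cast_sub ?_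
    exact (Finset.mem_Icc.1 hi).2.trans (min_le_left d c)
  · rw [Finset.mem_Icc] at hi hi'
    lia

section ExtensionCocycle

variable {R E L : Type*} [CommRing R] [LieRing E] [LieAlgebra R E] [LieRing L] [LieAlgebra R L]
  {f : E →ₗ⁅R⁆ L} {T : Submodule R E}

lemma mkQ_lie_congr (hT : ∀ u ∈ f.ker, ∀ y, ⁅u, y⁆ ∈ T) {x x' y y' : E} (hx : f x = f x')
    (hy : f y = f y') : T.mkQ ⁅x, y⁆ = T.mkQ ⁅x', y'⁆ := by
  have mem_ker {u u' : E} (hu : f u = f u') : u - u' ∈ f.ker := by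
    rw [LieHom.mem_ker, map_sub, hu, sub_self]
  have lie_sub_lie : ⁅x, y⁆ - ⁅x', y'⁆ = ⁅x - x', y⁆ - ⁅y - y', x'⁆ := by
    rw [sub_lie, sub_lie, ← lie_skew x' y, ← lie_skew x' y']
    abel
  rw [mkQ_apply, mkQ_apply, Submodule.Quotient.eq, lie_sub_lie]
  exact sub_mem (hT _ (mem_ker hx) _) (hT _ (mem_ker hy) _)

lemma map_mkQ_lowerCentralSeries_one (hf : Function.Surjective f)
    (c : twoCocycle R L (TrivialLieModule R L (E ⧸ T)))
    (hc : ∀ x y, c.1 (f x) (f y) = (TrivialLieModule.equiv R L _).symm (T.mkQ ⁅x, y⁆)) :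
    (lowerCentralSeries R E E 1).toSubmodule.map T.mkQ =
      (valueFiltration c 0).map (TrivialLieModule.equiv R L (E ⧸ T)).toLinearMap := by
  apply le_antisymm
  · rw [map_le_iff_le_comap, toSubmodule_lowerCentralSeries_succ, map₂_le]
    intro x _ y _
    exact ⟨_, apply_mem_map₂ _ mem_top (LieSubmodule.mem_top (f y)),
      congrArg (TrivialLieModule.equiv R L (E ⧸ T)) (hc x y)⟩
  · rw [map_le_iff_le_comap, valueFiltration, map₂_le]
    intro u _ v _
    obtain ⟨x, rfl⟩ := hf u
    obtain ⟨y, rfl⟩ := hf v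
    exact ⟨⁅x, y⁆, lie_mem_lowerCentralSeries_succ x (LieSubmodule.mem_top y),
      (congrArg (TrivialLieModule.equiv R L (E ⧸ T)) (hc x y)).symm⟩

end ExtensionCocycle

section Hopf

variable {k E L : Type*} [Field k] [LieRing E] [LieAlgebra k E] [LieRing L] [LieAlgebra k L]

/-- The dimension of `(ker f ∩ γ₂(E)) / [ker f, E]`: Hopf's formula for a presentation `f : E → L`
by a Lie algebra `E` that need not be free. -/
noncomputable def hopfDim (f : E →ₗ⁅k⁆ L) : ℕ :=
  finrank k (↥(f.ker ⊓ lowerCentralSeries k E E 1).toSubmodule ⧸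
    (⁅f.ker, (⊤ : LieIdeal k E)⁆ : LieIdeal k E).toSubmodule.comap
      (f.ker ⊓ lowerCentralSeries k E E 1).toSubmodule.subtype)

variable {f : E →ₗ⁅k⁆ L}

attribute [local instance] LieRing.ofAssociativeRing

lemma exists_twoCocycle_apply_map_map {T : Submodule k E} (hf : Function.Surjective f)
    (hT : ∀ u ∈ f.ker, ∀ y, ⁅u, y⁆ ∈ T) :
    ∃ c : twoCocycle k L (TrivialLieModule k L (E ⧸ T)),
      ∀ x y, c.1 (f x) (f y) = (TrivialLieModule.equiv k L _).symm (T.mkQ ⁅x, y⁆) := by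
  obtain ⟨σ, hσ⟩ := (f : E →ₗ[k] L).exists_rightInverse_of_surjective (LinearMap.range_eq_top.2 hf)
  let β : L →ₗ[k] L →ₗ[k] TrivialLieModule k L (E ⧸ T) :=
    ((toEnd k E E).toLinearMap.compl₁₂ σ σ).compr₂
      ((TrivialLieModule.equiv k L (E ⧸ T)).symm.toLinearMap ∘ₗ T.mkQ)
  have β_apply (x y : E) : β (f x) (f y) = (TrivialLieModule.equiv k L _).symm (T.mkQ ⁅x, y⁆) :=
    congrArg (TrivialLieModule.equiv k L (E ⧸ T)).symm
      (mkQ_lie_congr hT (LinearMap.congr_fun hσ (f x)) (LinearMap.congr_fun hσ (f y)))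
  have β_alt : β ∈ twoCochain k L (TrivialLieModule k L (E ⧸ T)) := by
    rw [mem_twoCochain_iff, hf.forall]
    intro x
    rw [β_apply, lie_self, map_zero, map_zero]
  have β_jacobi : (⟨β, β_alt⟩ : twoCochain _ _ _) ∈ twoCocycle k L _ := by
    rw [mem_twoCocycle_iff_of_trivial, hf.forall₃]
    intro x y z
    change β (f x) ⁅f y, f z⁆ = β ⁅f x, f y⁆ (f z) + β (f y) ⁅f x, f z⁆
    simp only [← LieHom.map_lie, β_apply, ← map_add]
    rw [leibniz_lie]
  exact ⟨⟨⟨β, β_alt⟩, β_jacobi⟩, β_apply⟩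

lemma exists_twoCocycle_finrank_valueFiltration_zero [FiniteDimensional k L]
    (hf : Function.Surjective f) :
    ∃ c : twoCocycle k L (TrivialLieModule k L
        (E ⧸ (⁅f.ker, (⊤ : LieIdeal k E)⁆ : LieIdeal k E).toSubmodule)),
      hopfDim f + finrank k (lowerCentralSeries k L L 1) = finrank k (valueFiltration c 0) := by
  let T := (⁅f.ker, (⊤ : LieIdeal k E)⁆ : LieIdeal k E).toSubmodule
  obtain ⟨c, hc⟩ := exists_twoCocycle_apply_map_map hf (T := T) fun u hu y ↦
    LieSubmodule.lie_mem_lie hu (LieSubmodule.mem_top y)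
  have map_mkQ := map_mkQ_lowerCentralSeries_one hf c hc
  have map_f : (lowerCentralSeries k E E 1).toSubmodule.map (f : E →ₗ[k] L) =
      (lowerCentralSeries k L L 1).toSubmodule := by
    rw [← LieIdeal.lowerCentralSeries_map_eq 1 hf, LieIdeal.coe_map_of_surjective hf]
  have : FiniteDimensional k ((lowerCentralSeries k E E 1).toSubmodule.map T.mkQ) := by
    rw [map_mkQ]
    infer_instance
  refine ⟨c, ?_⟩
  calc hopfDim f + finrank k (lowerCentralSeries k L L 1)
      = hopfDim f + finrank k ((lowerCentralSeries k E E 1).toSubmodule.map (f : E →ₗ[k] L)) := by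
        rw [map_f]
        rfl
    _ = finrank k ((lowerCentralSeries k E E 1).toSubmodule.map T.mkQ) :=
        finrank_inf_quotient_add_finrank_map (f : E →ₗ[k] L) _ T (LieSubmodule.lie_le_left f.ker ⊤)
    _ = finrank k (valueFiltration c 0) := by
        rw [map_mkQ, LinearEquiv.finrank_map_eq]

theorem schur_multiplier_dim_le_general [FiniteDimensional k L] {c n m : ℕ}
    (hc₁ : lowerCentralSeries k L L c = ⊥) (hc₂ : lowerCentralSeries k L L (c - 1) ≠ ⊥)
    (hn : finrank k L = n) (hm : finrank k (lowerCentralSeries k L L 1) = m)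
    (hf : Function.Surjective f) :
    (2 * hopfDim f : ℤ) ≤
      ((n : ℤ) - m - 1) * ((n : ℤ) + m)
        - 2 * ∑ i ∈ Finset.Icc 2 (min (n - m) c), ((n : ℤ) - m - i) := by
  obtain ⟨β, hβ⟩ := exists_twoCocycle_finrank_valueFiltration_zero hf
  have bound := finrank_valueFiltration_zero_add_sum_le β hc₁ hc₂
  obtain ⟨d, hd⟩ : ∃ d, finrank k (L ⧸ lowerCentralSeries k L L 1) = d := ⟨_, rfl⟩
  obtain rfl : d + m = n := by
    rw [← hd, ← hm, ← hn]
    exact finrank_quotient_add_finrank (lowerCentralSeries k L L 1).toSubmodule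
  have two_mul_choose : 2 * (d.choose 2 : ℤ) = d * (d - 1) := by
    qify
    rw [Nat.cast_choose_two]
    ring
  rw [← hβ, hm, hd] at bound
  have bound_int : (hopfDim f : ℤ) + m + ∑ i ∈ Finset.Icc 2 (min d c), ((d : ℤ) - i) ≤
      d.choose 2 + d * m := by
    rw [← cast_sum_Icc_tsub]
    exact_mod_cast bound
  simp only [Nat.add_sub_cancel, Nat.cast_add, add_sub_cancel_right]
  linarith

end Hopf

/-- If `L` is a finite-dimensional nilpotent Lie algebra of class `c` with `dim L = n` and
`dim γ₂(L) = m ≥ 1`, then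
`dim M(L) ≤ (1/2)(n−m−1)(n+m) − ∑_{i=2}^{min(n−m,c)} (n−m−i)`. -/
theorem schur_multiplier_dim_le
    (k : Type*) [Field k] (L : Type*) [LieRing L] [LieAlgebra k L]
    [FiniteDimensional k L] (c : ℕ)
    (hc₁ : LieModule.lowerCentralSeries k L L c = ⊥)
    (hc₂ : LieModule.lowerCentralSeries k L L (c - 1) ≠ ⊥)
    (n m : ℕ) (hn : Module.finrank k L = n)
    (hm : Module.finrank k (LieModule.lowerCentralSeries k L L 1 : LieSubmodule k L L) = m)
    (hm₁ : 1 ≤ m)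
    (X : Type*) (π : FreeLieAlgebra k X →ₗ⁅k⁆ L) (hπ : Function.Surjective π) :
    (2 * schurMultiplierDim k π : ℤ) ≤
      ((n : ℤ) - m - 1) * ((n : ℤ) + m)
        - 2 * ∑ i ∈ Finset.Icc 2 (min (n - m) c), ((n : ℤ) - m - i) := by
  exact schur_multiplier_dim_le_general hc₁ hc₂ hn hm hπ
end

section
/- A finite-dimensional Lie algebra L of dimension n over a field k is abelian if and only if dim(M(L)) = (1/2)n(n−1), where M(L) is the Schur multiplier of L computed from any free presentation via the Hopf formula. -/
/-!
Let `β_L : ⋀²L → L` be the bracket, which vanishes exactly when `L` is abelian. Since `[R, F]` is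
killed in `F ⧸ [R, F]`, the commutator of lifts of two elements of `L` is well defined there; this
gives `c : ⋀²L → F ⧸ [R, F]` with `c (π x ∧ π y) = [x, y]`, and the image of `R ∩ γ₂(F)` in
`F ⧸ [R, F]` is `c (ker β_L)`. So `dim M(L) = dim c (ker β_L) ≤ dim ker β_L ≤ dim ⋀²L = n(n-1)/2`,
and equality forces `ker β_L = ⋀²L`. Conversely, if `L` is abelian then `ker β_L = ⋀²L`, and `c` is
injective: lifting `π` to the central extension of `L` by `⋀²L` with cocycle `(a, b) ↦ a ∧ b`, which
is possible as `F` is free, produces a left inverse of `c`.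
-/

lemma finrank_quotient_comap_subtype {k V : Type*} [Ring k] [AddCommGroup V] [Module k V]
    (S T : Submodule k V) :
    Module.finrank k (S ⧸ T.comap S.subtype) = Module.finrank k (S.map T.mkQ) := by
  have e := (T.mkQ ∘ₗ S.subtype).quotKerEquivRange
  rw [LinearMap.ker_comp, Submodule.ker_mkQ, LinearMap.range_comp, Submodule.range_subtype] at e
  exact e.finrank_eq

lemma two_mul_finrank_exteriorPower_two (k V : Type*) [CommRing k] [Nontrivial k]
    [AddCommGroup V] [Module k V] [Module.Free k V] [Module.Finite k V] :
    2 * Module.finrank k (⋀[k]^2 V) = Module.finrank k V * (Module.finrank k V - 1) := by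
  rw [exteriorPower.finrank_eq, Nat.choose_two_right,
    Nat.mul_div_cancel' (Nat.even_mul_pred_self _).two_dvd]

section ExteriorBracket

variable (k L : Type*) [CommRing k] [LieRing L] [LieAlgebra k L]

/-- The Lie bracket of `L` as an alternating map of two variables. -/
def lieAlternatingMap : L [⋀^Fin 2]→ₗ[k] L where
  toFun v := ⁅v 0, v 1⁆
  map_update_add' v i x y := by fin_cases i <;> simp
  map_update_smul' v i c x := by fin_cases i <;> simp
  map_eq_zero_of_eq' v i j h hij := by
    fin_cases i <;> fin_cases j <;> simp_all

/-- The Lie bracket of `L` as a linear map on `⋀²L`, i.e. the differential of degree two in the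
Chevalley–Eilenberg complex up to sign. -/
noncomputable def exteriorBracket : ⋀[k]^2 L →ₗ[k] L :=
  exteriorPower.alternatingMapLinearEquiv (lieAlternatingMap k L)

variable {L} in
lemma exteriorBracket_ιMulti (v : Fin 2 → L) :
    exteriorBracket k L (exteriorPower.ιMulti k 2 v) = ⁅v 0, v 1⁆ :=
  exteriorPower.alternatingMapLinearEquiv_apply_ιMulti _ v

lemma exteriorBracket_eq_zero_iff : exteriorBracket k L = 0 ↔ IsLieAbelian L := by
  refine ⟨fun h => ⟨fun x y => ?_⟩, fun _ => ?_⟩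
  · simpa [h] using (exteriorBracket_ιMulti k ![x, y]).symm
  · ext v
    simp [exteriorBracket_ιMulti, trivial_lie_zero]

lemma range_exteriorBracket :
    (exteriorBracket k L).range = (LieModule.lowerCentralSeries k L L 1).toSubmodule := by
  rw [LinearMap.range_eq_map, ← exteriorPower.ιMulti_span, Submodule.map_span, ← Set.range_comp,
    LieModule.lowerCentralSeries_succ, LieModule.lowerCentralSeries_zero,
    LieSubmodule.lieIdeal_oper_eq_linear_span']
  congr 1
  ext z
  simp [exteriorBracket_ιMulti, (piFinTwoEquiv fun _ => L).exists_congr_left]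

variable {k L} in
lemma exteriorBracket_comp_map {L' : Type*} [LieRing L'] [LieAlgebra k L'] (f : L →ₗ⁅k⁆ L') :
    exteriorBracket k L' ∘ₗ exteriorPower.map 2 (f : L →ₗ[k] L') =
      (f : L →ₗ[k] L') ∘ₗ exteriorBracket k L := by
  ext v
  simp [exteriorBracket_ιMulti]

end ExteriorBracket

section FreeLieAlgebra

open LieModule.Cohomology

variable {k L M X : Type*} [CommRing k] [LieRing L] [LieAlgebra k L] [AddCommGroup M] [Module k M]

lemma exists_linearMap_apply_lie_eq_twoCocycle [LieRingModule L M] [LieModule k L M]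
    (c : twoCocycle k L M) (π : FreeLieAlgebra k X →ₗ⁅k⁆ L) :
    ∃ ψ : FreeLieAlgebra k X →ₗ[k] M, ∀ x y,
      ψ ⁅x, y⁆ = c.1 (π x) (π y) + ⁅π x, ψ y⁆ - ⁅π y, ψ x⁆ := by
  -- `p` lifts `π` to the extension of `L` by `M` defined by `c`; its `M`-component is `ψ`.
  let p : FreeLieAlgebra k X →ₗ⁅k⁆ LieAlgebra.ofTwoCocycle c :=
    FreeLieAlgebra.lift k fun i => LieAlgebra.ofProd c (π (FreeLieAlgebra.of k i), 0)
  let fst : LieAlgebra.ofTwoCocycle c →ₗ⁅k⁆ L :=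
    { toFun e := e.carrier.1
      map_add' _ _ := rfl
      map_smul' _ _ := rfl
      map_lie' := rfl }
  let snd : LieAlgebra.ofTwoCocycle c →ₗ[k] M :=
    { toFun e := e.carrier.2
      map_add' _ _ := rfl
      map_smul' _ _ := rfl }
  have fst_p (x) : fst (p x) = π x :=
    LieHom.congr_fun (FreeLieAlgebra.hom_ext (F₁ := fst.comp p) fun i => by
      rw [LieHom.comp_apply, FreeLieAlgebra.lift_of_apply]; rfl) x
  refine ⟨snd ∘ₗ (p : FreeLieAlgebra k X →ₗ[k] LieAlgebra.ofTwoCocycle c), fun x y => ?_⟩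
  simp only [← fst_p]
  exact congrArg snd (p.map_lie x y)

/-- An alternating map of two variables on a Lie algebra, regarded as a Lie algebra 2-cochain. -/
def twoCochainOfAlternatingMap (f : L [⋀^Fin 2]→ₗ[k] M) : twoCochain k L M where
  val := LinearMap.mk₂ k (fun x y => f ![x, y])
    (fun x x' y => by simpa using f.map_vecCons_add ![y] x x')
    (fun c x y => by simpa using f.map_vecCons_smul ![y] c x)
    (fun x y y' => by simpa using (f.curryLeft x).map_vecCons_add ![] y y')
    (fun c x y => by simpa using (f.curryLeft x).map_vecCons_smul ![] c y)
  property x := f.map_eq_zero_of_eq ![x, x] (i := 0) (j := 1) rfl zero_ne_one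

lemma twoCochainOfAlternatingMap_mem_twoCocycle [IsLieAbelian L] [LieRingModule L M]
    [LieModule k L M] [LieModule.IsTrivial L M] (f : L [⋀^Fin 2]→ₗ[k] M) :
    twoCochainOfAlternatingMap f ∈ twoCocycle k L M := by
  simp [mem_twoCocycle_iff_of_trivial, trivial_lie_zero]

lemma exists_linearMap_apply_lie_eq_alternatingMap [IsLieAbelian L] (f : L [⋀^Fin 2]→ₗ[k] M)
    (π : FreeLieAlgebra k X →ₗ⁅k⁆ L) :
    ∃ ψ : FreeLieAlgebra k X →ₗ[k] M, ∀ x y, ψ ⁅x, y⁆ = f ![π x, π y] := by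
  let e := TrivialLieModule.equiv k L M
  let c := twoCochainOfAlternatingMap (e.symm.toLinearMap.compAlternatingMap f)
  obtain ⟨ψ, hψ⟩ := exists_linearMap_apply_lie_eq_twoCocycle
    ⟨c, twoCochainOfAlternatingMap_mem_twoCocycle _⟩ π
  refine ⟨e.toLinearMap ∘ₗ ψ, fun x y => ?_⟩
  rw [LinearMap.comp_apply, hψ, trivial_lie_zero, trivial_lie_zero, add_zero, sub_zero]
  rfl

end FreeLieAlgebra

section Presentation

variable {k F L : Type*} [CommRing k] [LieRing F] [LieAlgebra k F] [LieRing L] [LieAlgebra k L]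
  {π : F →ₗ⁅k⁆ L} {s : L →ₗ[k] F}

lemma lie_sub_lie_mem_lie_ker_top {x x' y y' : F} (hx : π x = π x') (hy : π y = π y') :
    ⁅x, y⁆ - ⁅x', y'⁆ ∈ ⁅π.ker, (⊤ : LieIdeal k F)⁆ := by
  have hx' : x - x' ∈ π.ker := by simp [hx]
  have hy' : y - y' ∈ π.ker := by simp [hy]
  have split : ⁅x, y⁆ - ⁅x', y'⁆ = ⁅x - x', y⁆ + ⁅x', y - y'⁆ := by simp
  rw [split]
  refine add_mem (LieSubmodule.lie_mem_lie hx' (LieSubmodule.mem_top y)) ?_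
  rw [LieSubmodule.lie_comm]
  exact LieSubmodule.lie_mem_lie (LieSubmodule.mem_top x') hy'

variable (π s) in
/-- The map `⋀²L → F ⧸ [R, F]`, with `R = ker π`, sending `a ∧ b` to the class of `[s a, s b]`. When
`s` is a section of `π`, it is the commutator pairing of the central extension `F ⧸ [R, F]` of `L`,
and does not depend on `s`. -/
noncomputable def commutatorMap :
    ⋀[k]^2 L →ₗ[k] F ⧸ ⁅π.ker, (⊤ : LieIdeal k F)⁆.toSubmodule :=
  ⁅π.ker, (⊤ : LieIdeal k F)⁆.toSubmodule.mkQ ∘ₗ exteriorBracket k F ∘ₗ exteriorPower.map 2 s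

lemma commutatorMap_comp_map (hs : (π : F →ₗ[k] L) ∘ₗ s = LinearMap.id) :
    commutatorMap π s ∘ₗ exteriorPower.map 2 (π : F →ₗ[k] L) =
      ⁅π.ker, (⊤ : LieIdeal k F)⁆.toSubmodule.mkQ ∘ₗ exteriorBracket k F := by
  have π_s (x) : π (s x) = x := LinearMap.congr_fun hs x
  ext v
  simp only [LinearMap.compAlternatingMap_apply, LinearMap.comp_apply, commutatorMap,
    exteriorPower.map_apply_ιMulti, exteriorBracket_ιMulti, Submodule.mkQ_apply]
  exact (Submodule.Quotient.eq _).2 <|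
    lie_sub_lie_mem_lie_ker_top (π_s (π (v 0))) (π_s (π (v 1)))

lemma map_mkQ_ker_inf_lowerCentralSeries (hs : (π : F →ₗ[k] L) ∘ₗ s = LinearMap.id) :
    (π.ker ⊓ LieModule.lowerCentralSeries k F F 1).toSubmodule.map
        ⁅π.ker, (⊤ : LieIdeal k F)⁆.toSubmodule.mkQ =
      (exteriorBracket k L).ker.map (commutatorMap π s) := by
  set q := ⁅π.ker, (⊤ : LieIdeal k F)⁆.toSubmodule.mkQ
  set wedgeπ := exteriorPower.map 2 (π : F →ₗ[k] L)
  have wedgeπ_surjective : Function.Surjective wedgeπ :=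
    exteriorPower.map_surjective fun x => ⟨s x, LinearMap.congr_fun hs x⟩
  calc (π.ker ⊓ LieModule.lowerCentralSeries k F F 1).toSubmodule.map q
      = ((π.ker.toSubmodule.comap (exteriorBracket k F)).map (exteriorBracket k F)).map q := by
        rw [Submodule.map_comap_eq, range_exteriorBracket, inf_comm, LieSubmodule.inf_toSubmodule]
    _ = (((exteriorBracket k L).ker.comap wedgeπ).map wedgeπ).map (commutatorMap π s) := by
        rw [← Submodule.map_comp, ← Submodule.map_comp, commutatorMap_comp_map hs,
          LieHom.ker_toSubmodule, ← LinearMap.ker_comp, ← LinearMap.ker_comp,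
          exteriorBracket_comp_map]
    _ = (exteriorBracket k L).ker.map (commutatorMap π s) := by
        rw [Submodule.map_comap_eq_of_surjective wedgeπ_surjective]

end Presentation

lemma commutatorMap_injective {k L X : Type*} [CommRing k] [LieRing L] [LieAlgebra k L]
    [IsLieAbelian L] {π : FreeLieAlgebra k X →ₗ⁅k⁆ L} {s : L →ₗ[k] FreeLieAlgebra k X}
    (hs : (π : FreeLieAlgebra k X →ₗ[k] L) ∘ₗ s = LinearMap.id) :
    Function.Injective (commutatorMap π s) := by
  obtain ⟨ψ, hψ⟩ :=
    exists_linearMap_apply_lie_eq_alternatingMap (exteriorPower.ιMulti k 2) π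
  have comp_exteriorBracket : ψ ∘ₗ exteriorBracket k (FreeLieAlgebra k X) =
      exteriorPower.map 2 (π : FreeLieAlgebra k X →ₗ[k] L) := by
    ext v : 2
    simp only [LinearMap.compAlternatingMap_apply, LinearMap.comp_apply, exteriorBracket_ιMulti,
      hψ, exteriorPower.map_apply_ιMulti]
    congr 1
    ext i
    fin_cases i <;> rfl
  have lie_ker_top_le : ⁅π.ker, (⊤ : LieIdeal k (FreeLieAlgebra k X))⁆.toSubmodule ≤ ψ.ker := by
    rw [LieSubmodule.lieIdeal_oper_eq_linear_span', Submodule.span_le]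
    rintro _ ⟨x, hx, y, -, rfl⟩
    rw [SetLike.mem_coe, LinearMap.mem_ker, hψ]
    exact AlternatingMap.map_coord_zero _ 0 hx
  have leftInverse : Submodule.liftQ _ ψ lie_ker_top_le ∘ₗ commutatorMap π s = LinearMap.id := by
    rw [commutatorMap, ← LinearMap.comp_assoc, Submodule.liftQ_mkQ, ← LinearMap.comp_assoc,
      comp_exteriorBracket, ← exteriorPower.map_comp, hs, exteriorPower.map_id]
  exact Function.LeftInverse.injective
    (g := Submodule.liftQ _ ψ lie_ker_top_le) (LinearMap.congr_fun leftInverse)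

lemma schurMultiplierDim_eq_finrank_map_ker {k L X : Type*} [Field k] [LieRing L] [LieAlgebra k L]
    {π : FreeLieAlgebra k X →ₗ⁅k⁆ L} {s : L →ₗ[k] FreeLieAlgebra k X}
    (hs : (π : FreeLieAlgebra k X →ₗ[k] L) ∘ₗ s = LinearMap.id) :
    schurMultiplierDim k π =
      Module.finrank k ((exteriorBracket k L).ker.map (commutatorMap π s)) := by
  rw [← map_mkQ_ker_inf_lowerCentralSeries hs]
  exact finrank_quotient_comap_subtype _ _

/-- A finite-dimensional Lie algebra `L` of dimension `n` is abelian if and only if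
`dim M(L) = n(n−1)/2`. -/
theorem isLieAbelian_iff_schur_multiplier_dim
    (k : Type*) [Field k] (L : Type*) [LieRing L] [LieAlgebra k L]
    [FiniteDimensional k L] (n : ℕ) (hn : Module.finrank k L = n)
    (X : Type*) (π : FreeLieAlgebra k X →ₗ⁅k⁆ L) (hπ : Function.Surjective π) :
    IsLieAbelian L ↔ 2 * schurMultiplierDim k π = n * (n - 1) := by
  obtain ⟨s, hs⟩ := (π : FreeLieAlgebra k X →ₗ[k] L).exists_rightInverse_of_surjective
    (LinearMap.range_eq_top.2 hπ)
  rw [← hn, ← two_mul_finrank_exteriorPower_two, Nat.mul_right_inj two_ne_zero,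
    schurMultiplierDim_eq_finrank_map_ker hs]
  constructor
  · intro hL
    rw [(exteriorBracket_eq_zero_iff k L).2 hL, LinearMap.ker_zero, Submodule.map_top]
    exact LinearMap.finrank_range_of_inj (commutatorMap_injective hs)
  · intro hdim
    have ker_eq_top : (exteriorBracket k L).ker = ⊤ :=
      Submodule.eq_top_of_finrank_eq <| le_antisymm (Submodule.finrank_le _) <|
        hdim ▸ Submodule.finrank_map_le (commutatorMap π s) _
    exact (exteriorBracket_eq_zero_iff k L).1 (LinearMap.ker_eq_top.1 ker_eq_top)
end

section
/- Let L be a Lie algebra over a field (or commutative ring) and let i ≥ 3. For all x₁, x₂, …, x_{i+1} ∈ L, the following identity holds: [[x₁, x₂, …, x_i]_l, x_{i+1}] + [[x_{i+1}, [x₁, x₂, …, x_{i−1}]_l], x_i] + [[[x_i, x_{i+1}]_r, [x₁, …, x_{i−2}]_l], x_{i−1}] + [[[x_{i−1}, x_i, x_{i+1}]_r, [x₁, x₂, …, x_{i−3}]_l], x_{i−2}] + ⋯ + [[[x₃, …, x_{i+1}]_r, x₁], x₂] + [[x₂, …, x_{i+1}]_r, x₁] = 0. That is, the sum [[x₁,…,x_i]_l,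 x_{i+1}] + Σ_{k=1}^{i−1} [[[x_{i+2−k}, …, x_{i+1}]_r, [x₁, …, x_{i−k}]_l], x_{i+1−k}] + [[x₂, …, x_{i+1}]_r, x₁] equals zero. -/
/-- The left-normed bracket `[x₁, x₂, …, x_k]_l = [⋯[[x₁, x₂], x₃], ⋯, x_k]` of a list of
elements of a Lie algebra (a single element gives that element, the empty list gives `0`). -/
def leftNormedBracket {L : Type*} [LieRing L] : List L → L
  | [] => 0
  | x :: t => t.foldl (fun a b => ⁅a, b⁆) x

/-- The right-normed bracket `[x₁, x₂, …, x_k]_r = [x₁, [⋯[x_{k−2}, [x_{k−1}, x_k]]⋯]]` of a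
list of elements of a Lie algebra (a single element gives that element, the empty list `0`). -/
def rightNormedBracket {L : Type*} [LieRing L] : List L → L
  | [] => 0
  | [x] => x
  | x :: t => ⁅x, rightNormedBracket t⁆

/-!
Cut `x₁, …, x_{i+1}` into two blocks and bracket the left-normed bracket of the first with the
right-normed bracket of the second. By the Jacobi identity, moving one element across the cut
changes the value by exactly one summand of the identity, so the sum telescopes. The two extreme
cuts are the first boundary term and the negative of the last one.
-/

section

variable {L : Type*} [LieRing L]

theorem leftNormedBracket_concat {l : List L} (hl : l ≠ []) (y : L) :
    leftNormedBracket (l ++ [y]) = ⁅leftNormedBracket l, y⁆ := by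
  obtain ⟨a, t, rfl⟩ := List.exists_cons_of_ne_nil hl
  simp [leftNormedBracket]

theorem rightNormedBracket_cons {r : List L} (hr : r ≠ []) (y : L) :
    rightNormedBracket (y :: r) = ⁅y, rightNormedBracket r⁆ := by
  obtain ⟨a, t, rfl⟩ := List.exists_cons_of_ne_nil hr
  rfl

theorem lie_lie_eq_lie_lie_sub_lie_lie (a b y : L) : ⁅⁅b, a⁆, y⁆ = ⁅a, ⁅y, b⁆⁆ - ⁅⁅a, y⁆, b⁆ :=
  calc
    ⁅⁅b, a⁆, y⁆ = ⁅y, ⁅a, b⁆⁆ := by rw [lie_swap_lie, lie_skew]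
    _ = ⁅a, ⁅y, b⁆⁆ - ⁅⁅a, y⁆, b⁆ := by rw [lie_lie a y b, sub_sub_cancel]

theorem lie_lie_rightNormedBracket_leftNormedBracket {l r : List L} (hl : l ≠ []) (hr : r ≠ [])
    (y : L) :
    ⁅⁅rightNormedBracket r, leftNormedBracket l⁆, y⁆ =
      ⁅leftNormedBracket l, rightNormedBracket (y :: r)⁆ -
        ⁅leftNormedBracket (l ++ [y]), rightNormedBracket r⁆ := by
  rw [leftNormedBracket_concat hl, rightNormedBracket_cons hr, lie_lie_eq_lie_lie_sub_lie_lie]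

/-- The bracket `[[x₁, …, x_{i+1-k}]_l, [x_{i+2-k}, …, x_{i+1}]_r]` obtained by cutting
`x₁, …, x_{i+1}` so that the right block has length `k`. The indices use truncated subtraction,
so `k` should be at most `i`. -/
def splitBracket (x : ℕ → L) (i k : ℕ) : L :=
  ⁅leftNormedBracket ((List.range' 1 (i + 1 - k)).map x),
    rightNormedBracket ((List.range' (i + 2 - k) k).map x)⁆

theorem splitBracket_one (x : ℕ → L) (i : ℕ) :
    splitBracket x i 1 = ⁅leftNormedBracket ((List.range' 1 i).map x), x (i + 1)⁆ :=
  rfl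

theorem splitBracket_self (x : ℕ → L) (i : ℕ) :
    splitBracket x i i = ⁅x 1, rightNormedBracket ((List.range' 2 i).map x)⁆ := by
  rw [splitBracket, Nat.add_sub_cancel_left, Nat.add_sub_cancel_left]
  rfl

theorem splitBracket_succ_sub_splitBracket (x : ℕ → L) {i k : ℕ} (hk : 1 ≤ k) (hki : k < i) :
    splitBracket x i (k + 1) - splitBracket x i k =
      ⁅⁅rightNormedBracket ((List.range' (i + 2 - k) k).map x),
          leftNormedBracket ((List.range' 1 (i - k)).map x)⁆, x (i + 1 - k)⁆ := by
  have left_ne_nil : (List.range' 1 (i - k)).map x ≠ [] :=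
    List.map_eq_nil_iff.not.mpr ((List.range'_ne_nil_iff 1).mpr (Nat.sub_ne_zero_of_lt hki))
  have right_ne_nil : (List.range' (i + 2 - k) k).map x ≠ [] :=
    List.map_eq_nil_iff.not.mpr ((List.range'_ne_nil_iff _).mpr (Nat.ne_zero_of_lt hk))
  have left_concat : (List.range' 1 (i + 1 - k)).map x =
      (List.range' 1 (i - k)).map x ++ [x (i + 1 - k)] := by
    rw [show i + 1 - k = i - k + 1 by omega, List.range'_1_concat, List.map_append,
      List.map_singleton, Nat.add_comm 1]
  have right_cons : (List.range' (i + 1 - k) (k + 1)).map x =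
      x (i + 1 - k) :: (List.range' (i + 2 - k) k).map x := by
    rw [List.range'_succ, List.map_cons, show i + 1 - k + 1 = i + 2 - k by omega]
  rw [lie_lie_rightNormedBracket_leftNormedBracket left_ne_nil right_ne_nil, ← left_concat,
    ← right_cons, splitBracket, splitBracket, Nat.add_sub_add_right i 1 k,
    Nat.add_sub_add_right (i + 1) 1 k]

/-- The case `i = 1` is antisymmetry and the case `i = 2` is the Jacobi identity. -/
theorem leftNormed_rightNormed_identity_general {i : ℕ} (hi : 1 ≤ i) (x : ℕ → L) :
    ⁅leftNormedBracket ((List.range' 1 i).map x), x (i + 1)⁆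
      + ∑ k ∈ Finset.Icc 1 (i - 1),
          ⁅⁅rightNormedBracket ((List.range' (i + 2 - k) k).map x),
              leftNormedBracket ((List.range' 1 (i - k)).map x)⁆, x (i + 1 - k)⁆
      + ⁅rightNormedBracket ((List.range' 2 i).map x), x 1⁆ = 0 := by
  have telescope : ∑ k ∈ Finset.Icc 1 (i - 1),
      ⁅⁅rightNormedBracket ((List.range' (i + 2 - k) k).map x),
          leftNormedBracket ((List.range' 1 (i - k)).map x)⁆, x (i + 1 - k)⁆ =
        splitBracket x i i - splitBracket x i 1 := by
    rw [Finset.Icc_sub_one_right_eq_Ico_of_not_isMin (not_isMin_of_lt hi),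
      ← Finset.sum_Ico_sub (splitBracket x i) hi]
    refine Finset.sum_congr rfl fun k hk ↦ ?_
    obtain ⟨one_le_k, k_lt_i⟩ := Finset.mem_Ico.mp hk
    exact (splitBracket_succ_sub_splitBracket x one_le_k k_lt_i).symm
  rw [telescope, ← splitBracket_one, add_sub_cancel, splitBracket_self, ← lie_skew,
    neg_add_cancel]

end

/-- For `i ≥ 3` and elements `x₁, …, x_{i+1}` of a Lie algebra `L`:
`[[x₁,…,x_i]_l, x_{i+1}] + ∑_{k=1}^{i−1} [[[x_{i+2−k},…,x_{i+1}]_r, [x₁,…,x_{i−k}]_l], x_{i+1−k}]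
  + [[x₂,…,x_{i+1}]_r, x₁] = 0`. -/
theorem leftNormed_rightNormed_identity
    (R : Type*) (L : Type*) [CommRing R] [LieRing L] [LieAlgebra R L]
    (i : ℕ) (hi : 3 ≤ i) (x : ℕ → L) :
    ⁅leftNormedBracket ((List.range' 1 i).map x), x (i + 1)⁆
      + ∑ k ∈ Finset.Icc 1 (i - 1),
          ⁅⁅rightNormedBracket ((List.range' (i + 2 - k) k).map x),
              leftNormedBracket ((List.range' 1 (i - k)).map x)⁆, x (i + 1 - k)⁆
      + ⁅rightNormedBracket ((List.range' 2 i).map x), x 1⁆ = 0 :=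
  leftNormed_rightNormed_identity_general (by omega) x
end

section
/- Let L be a finite-dimensional nilpotent Lie algebra of nilpotency class c ≥ 2 over a field k. Then dim(M(L)) ≤ dim(M(L/γ_c(L))) + (dim(L/γ₂(L)) − 1)·dim(γ_c(L)), where M(·) denotes the Schur multiplier computed from any free presentation via the Hopf formula. -/
/-! Let `Q = L / I` with `I` central, and let `M` denote the Schur multiplier. Bracketing lifts of
elements of `I` with lifts of elements of `L` gives the first map of Ganea's exact sequence
`I ⊗ L/γ₂(L) → M(L) → M(Q) → I ∩ γ₂(L) → 0`. Counting dimensions along it yields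
`dim M(L) + dim (I ∩ γ₂(L)) ≤ dim M(Q) + dim (L/γ₂(L)) · dim I`, and the theorem is the case
`I = γ_c(L)`, which is central and contained in `γ₂(L)`. -/

open LieModule TensorProduct

theorem finrank_add_finrank_range_le_of_exact {k U V W Z : Type*} [Field k]
    [AddCommGroup U] [Module k U] [AddCommGroup V] [Module k V]
    [AddCommGroup W] [Module k W] [AddCommGroup Z] [Module k Z]
    {f : U →ₗ[k] V} {g : V →ₗ[k] W} {h : W →ₗ[k] Z}
    [FiniteDimensional k U] [FiniteDimensional k V] [FiniteDimensional k (LinearMap.range h)]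
    (hfg : Function.Exact f g) (hgh : Function.Exact g h) :
    Module.finrank k V + Module.finrank k (LinearMap.range h) ≤
      Module.finrank k W + Module.finrank k U := by
  have : FiniteDimensional k (LinearMap.ker h) := by
    rw [hgh.linearMap_ker_eq]
    infer_instance
  have : FiniteDimensional k (W ⧸ LinearMap.ker h) := h.quotKerEquivRange.symm.finiteDimensional
  have : FiniteDimensional k W := Module.Finite.of_submodule_quotient (LinearMap.ker h)
  have rank_g := g.finrank_range_add_finrank_ker
  have rank_h := h.finrank_range_add_finrank_ker
  have rank_f := f.finrank_range_le
  rw [hfg.linearMap_ker_eq] at rank_g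
  rw [hgh.linearMap_ker_eq] at rank_h
  omega

section LowerCentralSeries

variable {k L : Type*} [CommRing k] [LieRing L] [LieAlgebra k L]

section

variable {M : Type*} [AddCommGroup M] [Module k M] [LieRingModule L M] [LieModule k L M]

theorem toSubmodule_lie_le_iff {I : LieIdeal k L} {N : LieSubmodule k L M} {P : Submodule k M} :
    (⁅I, N⁆ : LieSubmodule k L M).toSubmodule ≤ P ↔ ∀ x ∈ I, ∀ m ∈ N, ⁅x, m⁆ ∈ P := by
  rw [LieSubmodule.lieIdeal_oper_eq_linear_span', Submodule.span_le]
  constructor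
  · exact fun h x hx m hm => h ⟨x, hx, m, hm, rfl⟩
  · rintro h _ ⟨x, hx, m, hm, rfl⟩
    exact h x hx m hm

theorem toSubmodule_lowerCentralSeries_one_le_iff {P : Submodule k M} :
    (lowerCentralSeries k L M 1).toSubmodule ≤ P ↔ ∀ (x : L) (m : M), ⁅x, m⁆ ∈ P := by
  rw [lowerCentralSeries_succ, toSubmodule_lie_le_iff]
  simp only [lowerCentralSeries_zero, LieSubmodule.mem_top, forall_const]

theorem lie_mem_lowerCentralSeries_one (x : L) (m : M) : ⁅x, m⁆ ∈ lowerCentralSeries k L M 1 :=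
  toSubmodule_lowerCentralSeries_one_le_iff.1 le_rfl x m

theorem lowerCentralSeries_le_maxTrivSubmodule {n : ℕ}
    (h : lowerCentralSeries k L M (n + 1) = ⊥) :
    lowerCentralSeries k L M n ≤ maxTrivSubmodule k L M :=
  (le_max_triv_iff_bracket_eq_bot k L M).2 (by rwa [← lowerCentralSeries_succ])

end

/-- The projection of a Lie algebra onto its quotient by an ideal, as a Lie algebra morphism. -/
def lieQuotientMk (I : LieIdeal k L) : L →ₗ⁅k⁆ L ⧸ I :=
  { I.toSubmodule.mkQ with map_lie' := fun {x y} => LieSubmodule.Quotient.mk_bracket I x y }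

theorem lieQuotientMk_surjective (I : LieIdeal k L) : Function.Surjective (lieQuotientMk I) :=
  I.toSubmodule.mkQ_surjective

theorem ker_lieQuotientMk (I : LieIdeal k L) : (lieQuotientMk I).ker = I := by
  rw [← LieSubmodule.toSubmodule_inj]
  exact I.toSubmodule.ker_mkQ

end LowerCentralSeries

theorem exists_freeLieAlgebra_lift {k X F L : Type*} [CommRing k]
    [LieRing F] [LieAlgebra k F] [LieRing L] [LieAlgebra k L]
    (π : FreeLieAlgebra k X →ₗ⁅k⁆ L) {ρ : F →ₗ⁅k⁆ L} (hρ : Function.Surjective ρ) :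
    ∃ φ : FreeLieAlgebra k X →ₗ⁅k⁆ F, ∀ x, ρ (φ x) = π x := by
  choose s hs using hρ
  let φ := FreeLieAlgebra.lift k fun x => s (π (FreeLieAlgebra.of k x))
  have hφ : ρ.comp φ = π := by
    ext x
    simp [φ, hs]
  exact ⟨φ, LieHom.congr_fun hφ⟩

theorem exists_bilinear_factorization {k S S' T T' M : Type*} [CommRing k]
    [AddCommGroup S] [Module k S] [AddCommGroup S'] [Module k S']
    [AddCommGroup T] [Module k T] [AddCommGroup T'] [Module k T'] [AddCommGroup M] [Module k M]
    {p : S →ₗ[k] S'} {r : T →ₗ[k] T'} (hp : Function.Surjective p) (hr : Function.Surjective r)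
    {B : S →ₗ[k] T →ₗ[k] M} (hBp : LinearMap.ker p ≤ LinearMap.ker B)
    (hBr : LinearMap.ker r ≤ LinearMap.ker B.flip) :
    ∃ b : S' →ₗ[k] T' →ₗ[k] M, ∀ s t, b (p s) (r t) = B s t := by
  let e := p.quotKerEquivOfSurjective hp
  let e' := r.quotKerEquivOfSurjective hr
  refine ⟨(LinearMap.liftQ₂ _ _ B hBp hBr).compl₁₂ e.symm.toLinearMap e'.symm.toLinearMap,
    fun s t => ?_⟩
  have he : e.symm (p s) = Submodule.Quotient.mk s := e.symm_apply_eq.2 rfl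
  have he' : e'.symm (r t) = Submodule.Quotient.mk t := e'.symm_apply_eq.2 rfl
  simp only [LinearMap.compl₁₂_apply, LinearEquiv.coe_coe, he, he', LinearMap.liftQ₂_mk]

section HopfFormula

variable {k F F' L L' : Type*} [CommRing k] [LieRing F] [LieAlgebra k F]
  [LieRing F'] [LieAlgebra k F'] [LieRing L] [LieAlgebra k L] [LieRing L'] [LieAlgebra k L']

/-- The numerator `R ∩ γ₂(F)` of the Hopf formula, where `R = ker π`. -/
abbrev hopfNumerator (π : F →ₗ⁅k⁆ L) : LieIdeal k F :=
  π.ker ⊓ lowerCentralSeries k F F 1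

/-- The denominator `[R, F]` of the Hopf formula, where `R = ker π`. -/
abbrev hopfDenominator (π : F →ₗ⁅k⁆ L) : LieIdeal k F :=
  ⁅π.ker, (⊤ : LieIdeal k F)⁆

/-- The Hopf quotient `(R ∩ γ₂(F)) / [R, F]` of a Lie algebra morphism `π : F → L` with kernel `R`;
for surjective `π` and free `F` it is the Schur multiplier of `L`. The denominator is pulled back
along the inclusion of the numerator. -/
abbrev SchurMultiplier (π : F →ₗ⁅k⁆ L) : Type _ :=
  (hopfNumerator π).toSubmodule ⧸
    (hopfDenominator π).toSubmodule.comap (hopfNumerator π).toSubmodule.subtype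

variable {π : F →ₗ⁅k⁆ L} {ρ : F' →ₗ⁅k⁆ L'}

theorem lie_mem_hopfDenominator_left {x : F} (hx : π x = 0) (y : F) :
    ⁅x, y⁆ ∈ hopfDenominator π :=
  LieSubmodule.lie_mem_lie (LieHom.mem_ker.2 hx) (LieSubmodule.mem_top y)

theorem lie_mem_hopfDenominator_right (x : F) {y : F} (hy : π y = 0) :
    ⁅x, y⁆ ∈ hopfDenominator π := by
  rw [← lie_skew]
  exact neg_mem (lie_mem_hopfDenominator_left hy x)

theorem toSubmodule_hopfDenominator_le_iff {P : Submodule k F} :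
    (hopfDenominator π).toSubmodule ≤ P ↔ ∀ x, π x = 0 → ∀ y, ⁅x, y⁆ ∈ P := by
  simp only [toSubmodule_lie_le_iff, LieHom.mem_ker, LieSubmodule.mem_top, forall_const]

theorem map_mem_hopfNumerator {φ : F →ₗ⁅k⁆ F'} (h : ∀ x, π x = 0 → ρ (φ x) = 0) {x : F}
    (hx : x ∈ hopfNumerator π) : φ x ∈ hopfNumerator ρ :=
  ⟨LieHom.mem_ker.2 (h x (LieHom.mem_ker.1 hx.1)),
    LieIdeal.map_lowerCentralSeries_le 1 (LieIdeal.mem_map hx.2)⟩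

theorem map_mem_hopfDenominator {φ : F →ₗ⁅k⁆ F'} (h : ∀ x, π x = 0 → ρ (φ x) = 0) {x : F}
    (hx : x ∈ hopfDenominator π) : φ x ∈ hopfDenominator ρ := by
  suffices hopfDenominator π ≤ (hopfDenominator ρ).comap φ from this hx
  refine (LieSubmodule.lie_le_iff _ _ _).2 fun y hy z _ => ?_
  rw [LieIdeal.mem_comap, LieHom.map_lie]
  exact lie_mem_hopfDenominator_left (h y (LieHom.mem_ker.1 hy)) _

theorem sub_mem_hopfDenominator {φ ψ : F' →ₗ⁅k⁆ F} (h : ∀ x, π (φ x) = π (ψ x)) {x : F'}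
    (hx : x ∈ lowerCentralSeries k F' F' 1) : φ x - ψ x ∈ hopfDenominator π := by
  have sub_mem_ker (y : F') : π (φ y - ψ y) = 0 := by rw [map_sub, h, sub_self]
  suffices (lowerCentralSeries k F' F' 1).toSubmodule ≤
      (hopfDenominator π).toSubmodule.comap ((φ : F' →ₗ[k] F) - (ψ : F' →ₗ[k] F)) from this hx
  refine toSubmodule_lowerCentralSeries_one_le_iff.2 fun y z => ?_
  have leibniz : φ ⁅y, z⁆ - ψ ⁅y, z⁆ = ⁅φ y - ψ y, φ z⁆ + ⁅ψ y, φ z - ψ z⁆ := by simp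
  change φ ⁅y, z⁆ - ψ ⁅y, z⁆ ∈ hopfDenominator π
  rw [leibniz]
  exact add_mem (lie_mem_hopfDenominator_left (sub_mem_ker y) _)
    (lie_mem_hopfDenominator_right _ (sub_mem_ker z))

namespace SchurMultiplier

/-- The map of Hopf quotients induced by a morphism `φ : F → F'` with `φ (ker π) ⊆ ker ρ`. -/
def map (φ : F →ₗ⁅k⁆ F') (h : ∀ x, π x = 0 → ρ (φ x) = 0) :
    SchurMultiplier π →ₗ[k] SchurMultiplier ρ :=
  Submodule.mapQ _ _
    ((φ : F →ₗ[k] F').restrict (p := (hopfNumerator π).toSubmodule)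
      (q := (hopfNumerator ρ).toSubmodule) fun _ => map_mem_hopfNumerator h)
    fun _ => map_mem_hopfDenominator h

theorem map_comp_map_eq_id {ρ : F' →ₗ⁅k⁆ L} {φ : F →ₗ⁅k⁆ F'} {ψ : F' →ₗ⁅k⁆ F}
    (hφ : ∀ x, ρ (φ x) = π x) (hψ : ∀ x, π (ψ x) = ρ x) :
    map ψ (fun x hx => (hψ x).trans hx) ∘ₗ map φ (fun x hx => (hφ x).trans hx) =
      (LinearMap.id : SchurMultiplier π →ₗ[k] SchurMultiplier π) := by
  ext x
  refine (Submodule.Quotient.eq _).2 ?_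
  exact sub_mem_hopfDenominator (φ := ψ.comp φ) (ψ := LieHom.id)
    (fun y => (hψ (φ y)).trans (hφ y)) x.2.2

theorem nonempty_linearEquiv_of_surjective {X Y : Type*} {π : FreeLieAlgebra k X →ₗ⁅k⁆ L}
    {ρ : FreeLieAlgebra k Y →ₗ⁅k⁆ L} (hπ : Function.Surjective π) (hρ : Function.Surjective ρ) :
    Nonempty (SchurMultiplier π ≃ₗ[k] SchurMultiplier ρ) := by
  obtain ⟨φ, hφ⟩ := exists_freeLieAlgebra_lift π hρ
  obtain ⟨ψ, hψ⟩ := exists_freeLieAlgebra_lift ρ hπ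
  exact ⟨.ofLinearMap _ _ (map_comp_map_eq_id hψ hφ) (map_comp_map_eq_id hφ hψ)⟩

section Ganea

variable {Q : Type*} [LieRing Q] [LieAlgebra k Q] {q : L →ₗ⁅k⁆ Q}

variable (π q) in
/-- The map `M(L) → M(Q)` induced by a morphism `q : L → Q`, where `M(Q)` is computed from the
composite presentation `q ∘ π`. -/
def mapComp : SchurMultiplier π →ₗ[k] SchurMultiplier (q.comp π) :=
  map LieHom.id fun x hx => by rw [LieHom.id_apply, LieHom.comp_apply, hx, map_zero]

theorem map_lie_eq_zero_of_ker_le_center (hq : q.ker ≤ LieAlgebra.center k L) {x : F}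
    (hx : q (π x) = 0) (y : F) : π ⁅x, y⁆ = 0 := by
  have comm : ⁅π y, π x⁆ = 0 :=
    (mem_maxTrivSubmodule k L L (π x)).1 (hq (LieHom.mem_ker.2 hx)) (π y)
  rw [LieHom.map_lie, ← lie_skew, comm, neg_zero]

theorem hopfDenominator_comp_le_hopfNumerator (hq : q.ker ≤ LieAlgebra.center k L) :
    hopfDenominator (q.comp π) ≤ hopfNumerator π :=
  (LieSubmodule.lie_le_iff _ _ _).2 fun _ hx y _ =>
    ⟨LieHom.mem_ker.2 (map_lie_eq_zero_of_ker_le_center hq (LieHom.mem_ker.1 hx) y),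
      lie_mem_lowerCentralSeries_one _ y⟩

/-- The map `M(Q) → L` of Ganea's sequence, sending the class of `x` to `π x`; its image lies in
`ker q ∩ γ₂(L)`. -/
def connecting (π : F →ₗ⁅k⁆ L) (hq : q.ker ≤ LieAlgebra.center k L) :
    SchurMultiplier (q.comp π) →ₗ[k] L :=
  Submodule.liftQ _ ((π : F →ₗ[k] L) ∘ₗ (hopfNumerator (q.comp π)).toSubmodule.subtype)
    fun _ hx => LieHom.mem_ker.1 (hopfDenominator_comp_le_hopfNumerator hq hx).1

theorem range_connecting (hπ : Function.Surjective π) (hq : q.ker ≤ LieAlgebra.center k L) :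
    LinearMap.range (connecting π hq) = (q.ker ⊓ lowerCentralSeries k L L 1).toSubmodule := by
  refine (Submodule.range_liftQ _ _ _).trans (le_antisymm ?_ ?_)
  · rintro _ ⟨⟨x, hx, hx'⟩, rfl⟩
    exact ⟨LieHom.mem_ker.2 (LieHom.mem_ker.1 hx),
      LieIdeal.map_lowerCentralSeries_le 1 (LieIdeal.mem_map hx')⟩
  · rintro y ⟨hy, hy'⟩
    rw [← LieIdeal.lowerCentralSeries_map_eq 1 hπ] at hy'
    obtain ⟨x, rfl⟩ := LieIdeal.mem_map_of_surjective hπ hy'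
    exact ⟨⟨x, LieHom.mem_ker.2 (LieHom.mem_ker.1 hy), x.2⟩, rfl⟩

theorem exact_mapComp_connecting (hq : q.ker ≤ LieAlgebra.center k L) :
    Function.Exact (mapComp π q) (connecting π hq) := by
  intro z
  constructor
  · obtain ⟨⟨x, hx⟩, rfl⟩ := Submodule.mkQ_surjective _ z
    exact fun hπx => ⟨Submodule.Quotient.mk ⟨x, LieHom.mem_ker.2 hπx, hx.2⟩, rfl⟩
  · rintro ⟨y, rfl⟩
    obtain ⟨⟨x, hx⟩, rfl⟩ := Submodule.mkQ_surjective _ y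
    exact LieHom.mem_ker.1 hx.1

/-- The bracket `ker (q ∘ π) × F → M(L)`, defined when `ker q` is central. -/
def bracket (π : F →ₗ⁅k⁆ L) (hq : q.ker ≤ LieAlgebra.center k L) :
    (q.comp π).ker →ₗ[k] F →ₗ[k] SchurMultiplier π :=
  LinearMap.mk₂ k
    (fun s x => Submodule.Quotient.mk ⟨⁅(s : F), x⁆, hopfDenominator_comp_le_hopfNumerator hq
      (LieSubmodule.lie_mem_lie s.2 (LieSubmodule.mem_top x))⟩)
    (fun _ _ _ => congrArg Submodule.Quotient.mk (Subtype.ext (add_lie _ _ _)))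
    (fun _ _ _ => congrArg Submodule.Quotient.mk (Subtype.ext (smul_lie _ _ _)))
    (fun _ _ _ => congrArg Submodule.Quotient.mk (Subtype.ext (lie_add _ _ _)))
    (fun _ _ _ => congrArg Submodule.Quotient.mk (Subtype.ext (lie_smul _ _ _)))

theorem bracket_eq_zero_iff {hq : q.ker ≤ LieAlgebra.center k L} {s : (q.comp π).ker} {x : F} :
    bracket π hq s x = 0 ↔ ⁅(s : F), x⁆ ∈ hopfDenominator π :=
  Submodule.Quotient.mk_eq_zero _

theorem lie_mem_hopfDenominator_of_mem_lowerCentralSeries_one (hπ : Function.Surjective π)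
    (hq : q.ker ≤ LieAlgebra.center k L) {s x : F} (hs : q (π s) = 0)
    (hx : π x ∈ lowerCentralSeries k L L 1) : ⁅s, x⁆ ∈ hopfDenominator π := by
  have of_commutator : (lowerCentralSeries k F F 1).toSubmodule ≤
      (hopfDenominator π).toSubmodule.comap (LieModule.toEnd k F F s) := by
    refine toSubmodule_lowerCentralSeries_one_le_iff.2 fun a b => ?_
    change ⁅s, ⁅a, b⁆⁆ ∈ hopfDenominator π
    rw [leibniz_lie]
    exact add_mem (lie_mem_hopfDenominator_left (map_lie_eq_zero_of_ker_le_center hq hs a) b)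
      (lie_mem_hopfDenominator_right a (map_lie_eq_zero_of_ker_le_center hq hs b))
  rw [← LieIdeal.lowerCentralSeries_map_eq 1 hπ] at hx
  obtain ⟨y, hy⟩ := LieIdeal.mem_map_of_surjective hπ hx
  have split : ⁅s, x⁆ = ⁅s, x - y⁆ + ⁅s, (y : F)⁆ := by rw [← lie_add, sub_add_cancel]
  rw [split]
  exact add_mem (lie_mem_hopfDenominator_right s (by rw [map_sub, hy, sub_self]))
    (of_commutator y.2)

theorem exists_bracket_factorization (hπ : Function.Surjective π)
    (hq : q.ker ≤ LieAlgebra.center k L) :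
    ∃ b : q.ker →ₗ[k] (L ⧸ (lowerCentralSeries k L L 1).toSubmodule) →ₗ[k] SchurMultiplier π,
      ∀ (s : (q.comp π).ker) (x : F),
        b ⟨π s, LieHom.mem_ker.2 (LieHom.mem_ker.1 s.2)⟩ (Submodule.Quotient.mk (π x)) =
          bracket π hq s x := by
  let p : (q.comp π).ker →ₗ[k] q.ker :=
    (π : F →ₗ[k] L).restrict fun s hs => LieHom.mem_ker.2 (LieHom.mem_ker.1 hs)
  have hp : Function.Surjective p := by
    rintro ⟨y, hy⟩
    obtain ⟨s, rfl⟩ := hπ y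
    exact ⟨⟨s, LieHom.mem_ker.2 (LieHom.mem_ker.1 hy)⟩, rfl⟩
  let r := (lowerCentralSeries k L L 1).toSubmodule.mkQ ∘ₗ (π : F →ₗ[k] L)
  have hr : Function.Surjective r := (Submodule.mkQ_surjective _).comp hπ
  refine exists_bilinear_factorization (p := p) (r := r) hp hr (fun s hs => ?_) fun x hx => ?_
  · ext x
    exact bracket_eq_zero_iff.2 (lie_mem_hopfDenominator_left (congrArg Subtype.val hs) x)
  · ext s
    have lie_mem := lie_mem_hopfDenominator_of_mem_lowerCentralSeries_one hπ hq
      (LieHom.mem_ker.1 s.2) ((Submodule.Quotient.mk_eq_zero _).1 hx)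
    exact (bracket_eq_zero_iff (hq := hq)).2 lie_mem

theorem mapComp_mk_eq_zero_iff {x : (hopfNumerator π).toSubmodule} :
    mapComp π q (Submodule.Quotient.mk x) = 0 ↔ (x : F) ∈ hopfDenominator (q.comp π) :=
  Submodule.Quotient.mk_eq_zero _

theorem mapComp_bracket (hq : q.ker ≤ LieAlgebra.center k L) (s : (q.comp π).ker) (x : F) :
    mapComp π q (bracket π hq s x) = 0 :=
  mapComp_mk_eq_zero_iff.2 (lie_mem_hopfDenominator_left (LieHom.mem_ker.1 s.2) x)

theorem ker_mapComp_le (hq : q.ker ≤ LieAlgebra.center k L) {P : Submodule k (SchurMultiplier π)}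
    (hP : ∀ s x, bracket π hq s x ∈ P) : LinearMap.ker (mapComp π q) ≤ P := by
  have denominator_le : (hopfDenominator (q.comp π)).toSubmodule ≤
      (P.comap (Submodule.mkQ _)).map (hopfNumerator π).toSubmodule.subtype :=
    toSubmodule_hopfDenominator_le_iff.2 fun s hs x =>
      ⟨_, hP ⟨s, LieHom.mem_ker.2 hs⟩ x, rfl⟩
  intro z hz
  obtain ⟨x, rfl⟩ := Submodule.mkQ_surjective _ z
  obtain ⟨y, hy, hyx⟩ := denominator_le (mapComp_mk_eq_zero_iff.1 hz)
  rwa [← Subtype.ext hyx]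

theorem exists_tensor_exact_mapComp (hπ : Function.Surjective π)
    (hq : q.ker ≤ LieAlgebra.center k L) :
    ∃ g : q.ker ⊗[k] (L ⧸ (lowerCentralSeries k L L 1).toSubmodule) →ₗ[k] SchurMultiplier π,
      Function.Exact g (mapComp π q) := by
  obtain ⟨b, hb⟩ := exists_bracket_factorization hπ hq
  refine ⟨TensorProduct.lift b, LinearMap.exact_iff.2 (le_antisymm ?_ ?_)⟩
  · exact ker_mapComp_le hq fun s x => ⟨_ ⊗ₜ _, (TensorProduct.lift.tmul _ _).trans (hb s x)⟩
  · rw [LinearMap.range_le_ker_iff]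
    refine TensorProduct.ext' fun ⟨y, hy⟩ z => ?_
    obtain ⟨s, rfl⟩ := hπ y
    obtain ⟨z, rfl⟩ := Submodule.mkQ_surjective _ z
    obtain ⟨x, rfl⟩ := hπ z
    have lift_eq := hb ⟨s, LieHom.mem_ker.2 (LieHom.mem_ker.1 hy)⟩ x
    exact (congrArg (mapComp π q) lift_eq).trans (mapComp_bracket hq _ x)

end Ganea

end SchurMultiplier

end HopfFormula

section Dimension

variable {k L : Type*} [Field k] [LieRing L] [LieAlgebra k L]

theorem SchurMultiplier.finrank_add_finrank_le {F Q : Type*} [LieRing F] [LieAlgebra k F]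
    [LieRing Q] [LieAlgebra k Q] {π : F →ₗ⁅k⁆ L} {q : L →ₗ⁅k⁆ Q}
    [FiniteDimensional k q.ker]
    [FiniteDimensional k (L ⧸ (lowerCentralSeries k L L 1).toSubmodule)]
    [FiniteDimensional k (SchurMultiplier π)]
    (hπ : Function.Surjective π) (hq : q.ker ≤ LieAlgebra.center k L) :
    Module.finrank k (SchurMultiplier π) +
        Module.finrank k (q.ker ⊓ lowerCentralSeries k L L 1 : LieIdeal k L) ≤
      Module.finrank k (SchurMultiplier (q.comp π)) +
        Module.finrank k (L ⧸ (lowerCentralSeries k L L 1).toSubmodule) *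
          Module.finrank k q.ker := by
  obtain ⟨g, hg⟩ := exists_tensor_exact_mapComp hπ hq
  have range_eq := range_connecting hπ hq
  have : FiniteDimensional k (LinearMap.range (connecting π hq)) := by
    rw [range_eq]
    exact Submodule.finiteDimensional_of_le (S₂ := q.ker.toSubmodule) inf_le_left
  have count := finrank_add_finrank_range_le_of_exact hg (exact_mapComp_connecting hq)
  rwa [range_eq, Module.finrank_tensorProduct, mul_comm (Module.finrank k q.ker)] at count

theorem schurMultiplierDim_eq_of_surjective {X Y : Type*} {π : FreeLieAlgebra k X →ₗ⁅k⁆ L}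
    {ρ : FreeLieAlgebra k Y →ₗ⁅k⁆ L} (hπ : Function.Surjective π) (hρ : Function.Surjective ρ) :
    schurMultiplierDim k π = schurMultiplierDim k ρ :=
  (SchurMultiplier.nonempty_linearEquiv_of_surjective hπ hρ).elim LinearEquiv.finrank_eq

end Dimension

/-- The natural number subtraction is truncated only when `L = γ₂(L)`, and `schurMultiplierDim` is
`0` by convention when the multiplier is infinite-dimensional. -/
theorem schur_multiplier_dim_le_quotient_general {k L X Y : Type*} [Field k]
    [LieRing L] [LieAlgebra k L] {I : LieIdeal k L} [FiniteDimensional k I]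
    [FiniteDimensional k (L ⧸ (lowerCentralSeries k L L 1).toSubmodule)]
    (hI : I ≤ LieAlgebra.center k L)
    {π : FreeLieAlgebra k X →ₗ⁅k⁆ L} (hπ : Function.Surjective π)
    {ρ : FreeLieAlgebra k Y →ₗ⁅k⁆ L ⧸ I} (hρ : Function.Surjective ρ) :
    schurMultiplierDim k π ≤ schurMultiplierDim k ρ +
      (Module.finrank k (L ⧸ (lowerCentralSeries k L L 1).toSubmodule) * Module.finrank k I -
        Module.finrank k (I ⊓ lowerCentralSeries k L L 1 : LieIdeal k L)) := by
  by_cases hfin : FiniteDimensional k (SchurMultiplier π)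
  · have ker_eq := ker_lieQuotientMk I
    have : FiniteDimensional k (lieQuotientMk I).ker := by rwa [ker_eq]
    have count := SchurMultiplier.finrank_add_finrank_le hπ (ker_eq.trans_le hI)
    rw [ker_eq] at count
    rw [schurMultiplierDim_eq_of_surjective (ρ := (lieQuotientMk I).comp π) hρ
      ((lieQuotientMk_surjective I).comp hπ)]
    change Module.finrank k (SchurMultiplier π) ≤ Module.finrank k (SchurMultiplier _) + _
    omega
  · exact (Module.finrank_of_not_finite hfin).trans_le (Nat.zero_le _)

/-- If `L` is a finite-dimensional nilpotent Lie algebra of class `c ≥ 2`, then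
`dim M(L) ≤ dim M(L/γ_c(L)) + (dim(L/γ₂(L)) − 1)·dim(γ_c(L))`.
Here `γ_c(L)` is `LieModule.lowerCentralSeries k L L (c-1)`. -/
theorem schur_multiplier_dim_le_quotient
    (k : Type*) [Field k] (L : Type*) [LieRing L] [LieAlgebra k L]
    [FiniteDimensional k L] (c : ℕ) (hc : 2 ≤ c)
    (hc₁ : LieModule.lowerCentralSeries k L L c = ⊥)
    (hc₂ : LieModule.lowerCentralSeries k L L (c - 1) ≠ ⊥)
    (X : Type*) (π : FreeLieAlgebra k X →ₗ⁅k⁆ L) (hπ : Function.Surjective π)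
    (Y : Type*)
    (ρ : FreeLieAlgebra k Y →ₗ⁅k⁆
      (L ⧸ (LieModule.lowerCentralSeries k L L (c - 1) : LieIdeal k L)))
    (hρ : Function.Surjective ρ) :
    schurMultiplierDim k π ≤
      schurMultiplierDim k ρ
        + (Module.finrank k
            (L ⧸ (LieModule.lowerCentralSeries k L L 1 : LieIdeal k L).toSubmodule) - 1)
          * Module.finrank k
              (LieModule.lowerCentralSeries k L L (c - 1) : LieSubmodule k L L) := by
  obtain ⟨n, rfl⟩ := Nat.exists_eq_add_of_le' hc
  have bound := schur_multiplier_dim_le_quotient_general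
    (lowerCentralSeries_le_maxTrivSubmodule hc₁) hπ hρ
  rwa [inf_eq_left.2 (antitone_lowerCentralSeries k L L (by omega)), ← Nat.sub_one_mul] at bound
end

section
/- Let L be a finite-dimensional nilpotent Lie algebra of nilpotency class c over a field k, let π : F → L be a free presentation with R = ker(π), and let 2 ≤ i ≤ c. Then the quotient vector space [F, γ_i(F) + R] / [γ_{i+1}(F) + R, F] has dimension at most dim(L/γ₂(L)) · dim(γ_i(L)/γ_{i+1}(L)). (Here γ_i(F) + R denotes the Lie ideal of F generated by γ_i(F) and R, and for i = c one has γ_{c+1}(F) + R = R, recovering the quotient [F, γ_c(F) + R]/[R, F].) -/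
/-!
By the Jacobi identity `[γ₂(F) + R, γ_i(F) + R] ≤ [γ_{i+1}(F) + R, F]`, so the bracket of `F`
descends to a surjection
`F/(γ₂(F) + R) ⊗ (γ_i(F) + R)/(γ_{i+1}(F) + R) → [F, γ_i(F) + R]/[γ_{i+1}(F) + R, F]`.
As `γ_j(F) + R` is the preimage of `γ_j(L)`, the source is `L/γ₂(L) ⊗ γ_i(L)/γ_{i+1}(L)`.
-/

universe u v

section LieSubmodule

open scoped TensorProduct

variable {k L M : Type*} [CommRing k] [LieRing L] [LieAlgebra k L]
  [AddCommGroup M] [Module k M] [LieRingModule L M] [LieModule k L M]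

theorem lieIdeal_lie_lie_le_sup (I J : LieIdeal k L) (N : LieSubmodule k L M) :
    ⁅⁅I, J⁆, N⁆ ≤ ⁅I, ⁅J, N⁆⁆ ⊔ ⁅J, ⁅I, N⁆⁆ := by
  set P := ⁅I, ⁅J, N⁆⁆ ⊔ ⁅J, ⁅I, N⁆⁆
  refine (LieSubmodule.lie_le_iff _ _ _).2 fun x hx m hm ↦ ?_
  let lieLeft : L →ₗ[k] M :=
    (LieModule.toModuleHom k L M).toLinearMap ∘ₗ (TensorProduct.mk k L M).flip m
  have lieLeft_apply (y : L) : lieLeft y = ⁅y, m⁆ := LieModule.toModuleHom_apply k L M y m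
  suffices ⁅I, J⁆.toSubmodule ≤ P.toSubmodule.comap lieLeft from lieLeft_apply x ▸ this hx
  rw [LieSubmodule.lieIdeal_oper_eq_linear_span', Submodule.span_le]
  rintro _ ⟨a, ha, b, hb, rfl⟩
  rw [SetLike.mem_coe, Submodule.mem_comap, lieLeft_apply, lie_lie]
  exact sub_mem
    (LieSubmodule.mem_sup_left (LieSubmodule.lie_mem_lie ha (LieSubmodule.lie_mem_lie hb hm)))
    (LieSubmodule.mem_sup_right (LieSubmodule.lie_mem_lie hb (LieSubmodule.lie_mem_lie ha hm)))

theorem lie_lowerCentralSeries_one_le (n : ℕ) :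
    ⁅(LieModule.lowerCentralSeries k L L 1 : LieIdeal k L), LieModule.lowerCentralSeries k L M n⁆
      ≤ LieModule.lowerCentralSeries k L M (n + 2) := by
  simpa only [LieModule.lowerCentralSeries_succ, LieModule.lowerCentralSeries_zero, sup_idem] using
    lieIdeal_lie_lie_le_sup (⊤ : LieIdeal k L) ⊤ (LieModule.lowerCentralSeries k L M n)

/-- The linear map `L ⊗ N → M`, `x ⊗ n ↦ ⁅x, n⁆`, given by the action of `L` on a Lie
submodule `N` of `M`. -/
noncomputable def lieTensorMap (N : LieSubmodule k L M) : L ⊗[k] N →ₗ[k] M :=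
  (LieModule.toModuleHom k L M).toLinearMap ∘ₗ N.toSubmodule.subtype.lTensor L

theorem lieTensorMap_tmul (N : LieSubmodule k L M) (x : L) (n : N) :
    lieTensorMap N (x ⊗ₜ n) = ⁅x, (n : M)⁆ :=
  LieModule.toModuleHom_apply k L M x n

theorem range_lieTensorMap (N : LieSubmodule k L M) :
    (lieTensorMap N).range = (⁅(⊤ : LieIdeal k L), N⁆ : LieSubmodule k L M).toSubmodule := by
  rw [LieSubmodule.lieIdeal_oper_eq_linear_span', LinearMap.range_eq_map,
    ← TensorProduct.span_tmul_eq_top, Submodule.map_span]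
  congr 1
  ext m
  simp [lieTensorMap_tmul]

/-- The linear map `L ⊗ N → [L, N] / K`, `x ⊗ n ↦ ⁅x, n⁆`, where `[L, N] / K` stands for the
quotient of `[L, N]` by its intersection with `K`. -/
noncomputable def lieTensorMapQuotient (N K : LieSubmodule k L M) :
    L ⊗[k] N →ₗ[k] (⁅(⊤ : LieIdeal k L), N⁆ : LieSubmodule k L M).toSubmodule ⧸
      K.toSubmodule.comap (⁅(⊤ : LieIdeal k L), N⁆ : LieSubmodule k L M).toSubmodule.subtype :=
  (Submodule.mkQ _).comp <| (lieTensorMap N).codRestrict _ fun t ↦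
    range_lieTensorMap N ▸ LinearMap.mem_range_self _ t

theorem lieTensorMapQuotient_surjective (N K : LieSubmodule k L M) :
    Function.Surjective (lieTensorMapQuotient N K) := by
  refine (Submodule.mkQ_surjective _).comp (LinearMap.range_eq_top.1 ?_)
  rw [LinearMap.range_codRestrict, range_lieTensorMap, Submodule.comap_subtype_self]

theorem lieTensorMapQuotient_tmul_eq_zero {N K : LieSubmodule k L M} {x : L} {n : N}
    (h : ⁅x, (n : M)⁆ ∈ K) : lieTensorMapQuotient N K (x ⊗ₜ n) = 0 :=
  (Submodule.Quotient.mk_eq_zero _).2 <|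
    show lieTensorMap N (x ⊗ₜ n) ∈ K from (lieTensorMap_tmul N x n).symm ▸ h

/-- The linear map `L/I ⊗ N/N' → [L, N]/K` induced by `x ⊗ n ↦ ⁅x, n⁆`. As `N'` is not assumed
to lie in `N`, the quotient `N/N'` is by the intersection of `N` with `N'`. -/
noncomputable def lieQuotientTensorMap {I : LieIdeal k L} {N N' K : LieSubmodule k L M}
    (hI : ⁅I, N⁆ ≤ K) (hN' : ⁅(⊤ : LieIdeal k L), N'⁆ ≤ K) :
    (L ⧸ I.toSubmodule) ⊗[k] (N.toSubmodule ⧸ N'.toSubmodule.comap N.toSubmodule.subtype) →ₗ[k]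
      (⁅(⊤ : LieIdeal k L), N⁆ : LieSubmodule k L M).toSubmodule ⧸
        K.toSubmodule.comap (⁅(⊤ : LieIdeal k L), N⁆ : LieSubmodule k L M).toSubmodule.subtype :=
  (Submodule.liftQ _ (lieTensorMapQuotient N K) <| sup_le
    (LinearMap.range_le_ker_iff.2 <| TensorProduct.ext' fun x n ↦
      lieTensorMapQuotient_tmul_eq_zero <| hI <| LieSubmodule.lie_mem_lie x.2 n.2)
    (LinearMap.range_le_ker_iff.2 <| TensorProduct.ext' fun x n ↦
      lieTensorMapQuotient_tmul_eq_zero <| hN' <|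
        LieSubmodule.lie_mem_lie (LieSubmodule.mem_top x) n.2)).comp
    (TensorProduct.quotientTensorQuotientEquiv _ _).toLinearMap

theorem lieQuotientTensorMap_surjective {I : LieIdeal k L} {N N' K : LieSubmodule k L M}
    (hI : ⁅I, N⁆ ≤ K) (hN' : ⁅(⊤ : LieIdeal k L), N'⁆ ≤ K) :
    Function.Surjective (lieQuotientTensorMap hI hN') := by
  rw [lieQuotientTensorMap, LinearMap.coe_comp, LinearEquiv.coe_coe, EquivLike.surjective_comp,
    ← LinearMap.range_eq_top, Submodule.range_liftQ, LinearMap.range_eq_top]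
  exact lieTensorMapQuotient_surjective N K

end LieSubmodule

section LowerCentralSeries

variable {k F L : Type*} [CommRing k] [LieRing F] [LieAlgebra k F] [LieRing L] [LieAlgebra k L]

theorem comap_lowerCentralSeries_eq_sup_ker {π : F →ₗ⁅k⁆ L} (hπ : Function.Surjective π)
    (n : ℕ) :
    LieIdeal.comap π (LieModule.lowerCentralSeries k L L n) =
      LieModule.lowerCentralSeries k F F n ⊔ π.ker := by
  rw [← LieIdeal.lowerCentralSeries_map_eq n hπ]
  exact LieIdeal.comap_map_eq (congr_arg SetLike.coe (LieIdeal.coe_map_of_surjective hπ))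

theorem lie_lowerCentralSeries_one_sup_le (R : LieIdeal k F) (n : ℕ) :
    ⁅(LieModule.lowerCentralSeries k F F 1 ⊔ R : LieIdeal k F),
        LieModule.lowerCentralSeries k F F n ⊔ R⁆
      ≤ ⁅LieModule.lowerCentralSeries k F F (n + 1) ⊔ R, (⊤ : LieIdeal k F)⁆ := by
  have hR : ⁅R, (⊤ : LieIdeal k F)⁆ ≤
      ⁅LieModule.lowerCentralSeries k F F (n + 1) ⊔ R, (⊤ : LieIdeal k F)⁆ :=
    LieSubmodule.mono_lie_left _ le_sup_right
  rw [LieSubmodule.sup_lie, LieSubmodule.lie_sup]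
  refine sup_le (sup_le ?_ ?_) ((LieSubmodule.mono_lie_right _ le_top).trans hR)
  · refine (lie_lowerCentralSeries_one_le n).trans ?_
    rw [LieModule.lowerCentralSeries_succ, LieSubmodule.lie_comm]
    exact LieSubmodule.mono_lie_left _ le_sup_left
  · rw [LieSubmodule.lie_comm]
    exact (LieSubmodule.mono_lie_right _ le_top).trans hR

end LowerCentralSeries

section QuotientRank

variable {k : Type*} {V : Type u} {W : Type v} [Ring k] [AddCommGroup V] [Module k V]
  [AddCommGroup W] [Module k W] {f : V →ₗ[k] W}

theorem lift_rank_quotient_comap (hf : Function.Surjective f) (Q : Submodule k W) :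
    Cardinal.lift.{v} (Module.rank k (V ⧸ Q.comap f)) =
      Cardinal.lift.{u} (Module.rank k (W ⧸ Q)) := by
  have hker : Q.comap f = (Q.mkQ ∘ₗ f).ker := by rw [LinearMap.ker_comp, Submodule.ker_mkQ]
  exact ((Submodule.quotEquivOfEq _ _ hker).trans <|
    (Q.mkQ ∘ₗ f).quotKerEquivOfSurjective (Q.mkQ_surjective.comp hf)).lift_rank_eq

theorem lift_rank_comap_quotient_comap (hf : Function.Surjective f) (P Q : Submodule k W) :
    Cardinal.lift.{v} (Module.rank k (P.comap f ⧸ (Q.comap f).comap (P.comap f).subtype)) =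
      Cardinal.lift.{u} (Module.rank k (P ⧸ Q.comap P.subtype)) :=
  lift_rank_quotient_comap (f.submoduleComap_surjective_of_surjective P hf) (Q.comap P.subtype)

end QuotientRank

theorem dim_bracket_quotient_le_general {k : Type*} {F : Type u} {L : Type v} [Field k]
    [LieRing F] [LieAlgebra k F] [LieRing L] [LieAlgebra k L] {π : F →ₗ⁅k⁆ L}
    (hπ : Function.Surjective π) (n : ℕ) :
    let R : LieIdeal k F := π.ker
    let A : Submodule k F :=
      (⁅(⊤ : LieIdeal k F),
          LieModule.lowerCentralSeries k F F n ⊔ R⁆ : LieIdeal k F).toSubmodule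
    let B : Submodule k F :=
      (⁅(LieModule.lowerCentralSeries k F F (n + 1) ⊔ R : LieIdeal k F),
          (⊤ : LieIdeal k F)⁆ : LieIdeal k F).toSubmodule
    let G (j : ℕ) : Submodule k L := (LieModule.lowerCentralSeries k L L j).toSubmodule
    Cardinal.lift.{v} (Module.rank k (A ⧸ B.comap A.subtype)) ≤
      Cardinal.lift.{u} (Module.rank k (L ⧸ G 1) *
        Module.rank k (G n ⧸ (G (n + 1)).comap (G n).subtype)) := by
  intro R A B G
  let J (j : ℕ) : Submodule k F := (LieModule.lowerCentralSeries k F F j ⊔ R).toSubmodule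
  have hJ (j : ℕ) : J j = (G j).comap π.toLinearMap :=
    congr_arg LieSubmodule.toSubmodule (comap_lowerCentralSeries_eq_sup_ker hπ j).symm
  have rank_le : Module.rank k (A ⧸ B.comap A.subtype) ≤
      Module.rank k (F ⧸ J 1) * Module.rank k (J n ⧸ (J (n + 1)).comap (J n).subtype) := by
    rw [← rank_tensorProduct']
    exact LinearMap.rank_le_of_surjective _ <| lieQuotientTensorMap_surjective
      (lie_lowerCentralSeries_one_sup_le R n) (LieSubmodule.lie_comm ⊤ _).le
  rw [Cardinal.lift_mul, ← lift_rank_quotient_comap (f := π.toLinearMap) hπ,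
    ← lift_rank_comap_quotient_comap (f := π.toLinearMap) hπ, ← Cardinal.lift_mul,
    Cardinal.lift_le, ← hJ, ← hJ, ← hJ]
  exact rank_le

/-- Let `L` be a finite-dimensional nilpotent Lie algebra of class `c`, `π : F → L` a free
presentation with `R = ker π`, and `2 ≤ i ≤ c`.  Then the vector space
`[F, γ_i(F) + R] / [γ_{i+1}(F) + R, F]` has dimension at most
`dim(L/γ₂(L)) · dim(γ_i(L)/γ_{i+1}(L))`.
Here `γ_j` is `LieModule.lowerCentralSeries _ _ _ (j-1)`. -/
theorem dim_bracket_quotient_le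
    (k : Type*) [Field k] (L : Type*) [LieRing L] [LieAlgebra k L]
    [FiniteDimensional k L] (c : ℕ)
    (hc₁ : LieModule.lowerCentralSeries k L L c = ⊥)
    (hc₂ : LieModule.lowerCentralSeries k L L (c - 1) ≠ ⊥)
    (X : Type*) (π : FreeLieAlgebra k X →ₗ⁅k⁆ L) (hπ : Function.Surjective π)
    (i : ℕ) (hi₂ : 2 ≤ i) (hic : i ≤ c) :
    let F := FreeLieAlgebra k X
    let R : LieIdeal k F := π.ker
    -- `[F, γ_i(F) + R]`
    let A : Submodule k F :=
      (⁅(⊤ : LieIdeal k F),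
          LieModule.lowerCentralSeries k F F (i - 1) ⊔ R⁆ : LieIdeal k F).toSubmodule
    -- `[γ_{i+1}(F) + R, F]`
    let B : Submodule k F :=
      (⁅(LieModule.lowerCentralSeries k F F i ⊔ R : LieIdeal k F),
          (⊤ : LieIdeal k F)⁆ : LieIdeal k F).toSubmodule
    -- `γ_i(L)` as a subspace of `L`
    let Gi : Submodule k L := (LieModule.lowerCentralSeries k L L (i - 1)).toSubmodule
    Module.rank k (↥A ⧸ B.comap A.subtype) ≤
      ((Module.finrank k
          (L ⧸ (LieModule.lowerCentralSeries k L L 1 : LieIdeal k L).toSubmodule)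
        * Module.finrank k
            (↥Gi ⧸ ((LieModule.lowerCentralSeries k L L i).toSubmodule).comap Gi.subtype) : ℕ)
        : Cardinal) := by
  obtain ⟨n, rfl⟩ := Nat.exists_eq_add_of_le' (one_le_two.trans hi₂)
  exact Cardinal.lift_le.1 <| by
    simpa [← Module.finrank_eq_rank] using dim_bracket_quotient_le_general hπ n
end
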